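/- arXiv:2403.14875 — 3 statements merged into one kernel-verified Lean document; each statement's English description precedes it below -/
import Mathlib

section
/- Mihailova's theorem: for every n ≥ 2, the membership problem on F_n × F_n is undecidable; that is, there exists a finitely generated subgroup H of F_n × F_n such that there is no computable function deciding, given an element g of F_n × F_n, whether g ∈ H. -/
/-!
Consider a machine whose configurations are a state `q` and a vector `a` of integer registers, and
which at each step replaces the last digit of one register. Its steps form finitely many affine
rules `source y ↦ target y` between cosets of configurations. Represent a configuration by
`x(a) t(q) x(a)⁻¹`, where the letters `x` commute. A stable letter `r` for each rule conjugates the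
representatives of its sources to those of its targets, and a last letter `s` commutes with all the
`r` and with the representative of a fixed halting configuration. Then `s` commutes with the
representative of a configuration exactly when that configuration reaches the halting one. For the
nontrivial direction, HNN extensions are replaced by groups of permutations: if `G` acts by
translation on countably many copies of itself, any two embeddings of a group into `G` are
conjugate, and compatibly with a subgroup `K` when both pull `K` back to the same subgroup.

Coding the stacks of a Turing machine by integers turns its halting problem into such a reachability
problem, which gives a finite presentation `⟨X ∣ R⟩` with undecidable word problem. Finally
`(w, 1)` belongs to the fibre product of two copies of the free group over `⟨X ∣ R⟩` exactly when
`w` is trivial in `⟨X ∣ R⟩`, and this fibre product is generated by the diagonal and the `(r, 1)`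
with `r ∈ R`.
-/

open Function
open scoped commutatorElement

/-! ### Conjugating subgroups by permutations -/

/-- The diagonal action of permutations of `X` on `X × Y`, trivial on `Y`. -/
def prodPermHom (X Y : Type*) : Equiv.Perm X →* Equiv.Perm (X × Y) where
  toFun f := f.prodCongr (Equiv.refl Y)
  map_one' := rfl
  map_mul' _ _ := rfl

@[simp]
theorem prodPermHom_apply {X Y : Type*} (f : Equiv.Perm X) (p : X × Y) :
    prodPermHom X Y f p = (f p.1, p.2) := rfl

open scoped Classical in
/-- The involution of `X × Bool` exchanging the two copies of `S`. -/
noncomputable def flipOn {X : Type*} (S : Set X) : Equiv.Perm (X × Bool) :=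
  Involutive.toPerm (fun p ↦ (p.1, if p.1 ∈ S then !p.2 else p.2))
    fun p ↦ by by_cases h : p.1 ∈ S <;> simp [h]

theorem commute_flipOn_prodPermHom_iff {X : Type*} {S : Set X} {f : Equiv.Perm X} :
    Commute (flipOn S) (prodPermHom X Bool f) ↔ ∀ x, f x ∈ S ↔ x ∈ S := by
  classical
  have flipOn_apply (x b) : flipOn S (x, b) = (x, if x ∈ S then !b else b) := rfl
  constructor
  · intro h x
    have hx := DFunLike.congr_fun h.eq (x, false)
    by_cases h₁ : f x ∈ S <;> by_cases h₂ : x ∈ S <;> simp_all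
  · intro h
    ext ⟨x, b⟩ <;> simp [flipOn_apply, h x]

theorem exists_equiv_nat_sum_nat {X : Type*} [Countable X] {S : Set X} (hS : S.Infinite)
    (hS' : Sᶜ.Infinite) : ∃ e : X ≃ ℕ ⊕ ℕ, ∀ x, e x ∈ Set.range Sum.inl ↔ x ∈ S := by
  classical
  have := hS.to_subtype
  have := hS'.to_subtype
  obtain ⟨e⟩ := nonempty_equiv_of_countable (α := S) (β := ℕ)
  obtain ⟨e'⟩ := nonempty_equiv_of_countable (α := ↥Sᶜ) (β := ℕ)
  refine ⟨(Equiv.Set.sumCompl S).symm.trans (e.sumCongr e'), fun x ↦ ?_⟩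
  by_cases hx : x ∈ S
  · simp [Equiv.Set.sumCompl_symm_apply_of_mem hx, hx]
  · simp [Equiv.Set.sumCompl_symm_apply_of_notMem hx, hx]

section Conjugators

variable {G W : Type*} [Group G] [Group W]

theorem exists_isComplement_of_mul_mem (H K : Subgroup G) :
    ∃ T : Set G, Subgroup.IsComplement (H : Set G) T ∧ ∀ h ∈ H, ∀ t ∈ T, h * t ∈ K → t ∈ K := by
  have exists_rep (c : Quotient (QuotientGroup.rightRel H)) :
      ∃ t : G, Quotient.mk'' t = c ∧ ((∃ g ∈ K, Quotient.mk'' g = c) → t ∈ K) := by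
    by_cases hc : ∃ g ∈ K, Quotient.mk'' g = c
    · obtain ⟨g, hg, hgc⟩ := hc
      exact ⟨g, hgc, fun _ ↦ hg⟩
    · exact ⟨c.out, c.out_eq', fun h ↦ absurd h hc⟩
  choose rep rep_mk rep_mem using exists_rep
  refine ⟨Set.range rep, Subgroup.isComplement_range_right rep_mk, ?_⟩
  rintro h hh _ ⟨c, rfl⟩ hmem
  refine rep_mem c ⟨_, hmem, .trans (Quotient.sound' ?_) (rep_mk c)⟩
  rw [QuotientGroup.rightRel_apply]
  simpa using H.inv_mem hh

/-- As a `W`-set with a distinguished subset, `G × (ℕ ⊕ ℕ)` with `K × ℕ` (on the left summand) is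
determined by the preimage of `K` in `W`. -/
theorem exists_equivariant_equiv [Countable G] (K : Subgroup G) {ι : W →* G} (hι : Injective ι) :
    ∃ e : W × (ℕ ⊕ ℕ) ≃ G × (ℕ ⊕ ℕ), (∀ w p, e (w * p.1, p.2) = (ι w * (e p).1, (e p).2)) ∧
      ∀ p, e p ∈ (K : Set G) ×ˢ Set.range Sum.inl ↔
        p ∈ (K.comap ι : Set W) ×ˢ Set.range Sum.inl := by
  obtain ⟨T, hT, hTK⟩ := exists_isComplement_of_mul_mem ι.range K
  let eG : W × T ≃ G := ((MonoidHom.ofInjective hι).toEquiv.prodCongr (.refl T)).trans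
    hT.equiv.symm
  have eG_apply (p : W × T) : eG p = ι p.1 * p.2 := rfl
  have eG_mem (p : W × T) : eG p ∈ K ↔ ι p.1 ∈ K ∧ (p.2 : G) ∈ K := by
    have h : eG p ∈ K → (p.2 : G) ∈ K := hTK _ ⟨p.1, rfl⟩ _ p.2.2
    exact ⟨fun hp ↦ ⟨(K.mul_mem_cancel_right (h hp)).1 hp, h hp⟩, fun hp ↦ K.mul_mem hp.1 hp.2⟩
  obtain ⟨t₀, ht₀⟩ : ∃ t₀ : T, (t₀ : G) ∈ K :=
    ⟨(eG.symm 1).2, ((eG_mem _).1 (by simp [K.one_mem])).2⟩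
  let S : Set (T × (ℕ ⊕ ℕ)) := (Subtype.val ⁻¹' (K : Set G)) ×ˢ Set.range Sum.inl
  obtain ⟨eT, heT⟩ := exists_equiv_nat_sum_nat (S := S)
    (Set.infinite_of_injective_forall_mem (f := fun n : ℕ ↦ (t₀, Sum.inl n))
      (fun _ _ h ↦ by simpa using h) fun n ↦ ⟨ht₀, n, rfl⟩)
    (Set.infinite_of_injective_forall_mem (f := fun n : ℕ ↦ (t₀, Sum.inr n))
      (fun _ _ h ↦ by simpa using h) fun n ↦ by simp [S])
  refine ⟨((Equiv.refl W).prodCongr eT.symm).trans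
    ((Equiv.prodAssoc W T (ℕ ⊕ ℕ)).symm.trans (eG.prodCongr (.refl _))), fun w p ↦ ?_, fun p ↦ ?_⟩
  · simp [eG_apply, mul_assoc]
  · have h := heT (eT.symm p.2)
    simp only [Equiv.apply_symm_apply, S, Set.mem_prod, Set.mem_preimage, SetLike.mem_coe] at h
    simp only [Equiv.trans_apply, Equiv.prodCongr_apply, Prod.map, Equiv.prodAssoc_symm_apply,
      Equiv.coe_refl, id, Set.mem_prod, SetLike.mem_coe, eG_mem, Subgroup.mem_comap, h, and_assoc]

theorem exists_conjugators.{u} {G : Type u} [Group G] [Countable G] {I : Type*} (K : Subgroup G)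
    {ι ι' : I → W →* G} (hι : ∀ i, Injective (ι i)) (hι' : ∀ i, Injective (ι' i))
    (hK : ∀ i, K.comap (ι i) = K.comap (ι' i)) :
    ∃ (P : Type u) (_ : Group P) (j : G →* P) (r : I → P) (s : P),
      (∀ i w, SemiconjBy (r i) (j (ι i w)) (j (ι' i w))) ∧ (∀ i, Commute s (r i)) ∧
      ∀ g, Commute s (j g) ↔ g ∈ K := by
  choose e e_mul e_mem using fun i ↦ exists_equivariant_equiv K (hι i)
  choose e' e'_mul e'_mem using fun i ↦ exists_equivariant_equiv K (hι' i)
  let S : Set (G × (ℕ ⊕ ℕ)) := (K : Set G) ×ˢ Set.range Sum.inl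
  let translate : G →* Equiv.Perm (G × (ℕ ⊕ ℕ)) :=
    (prodPermHom G (ℕ ⊕ ℕ)).comp (MulAction.toPermHom G G)
  have translate_apply (g p) : translate g p = (g * p.1, p.2) := rfl
  let r (i : I) : Equiv.Perm (G × (ℕ ⊕ ℕ)) := (e i).symm.trans (e' i)
  have r_apply (i p) : r i (e i p) = e' i p := by simp [r]
  refine ⟨Equiv.Perm ((G × (ℕ ⊕ ℕ)) × Bool), inferInstance, (prodPermHom _ Bool).comp translate,
    fun i ↦ prodPermHom _ Bool (r i), flipOn S, fun i w ↦ ?_,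
    fun i ↦ commute_flipOn_prodPermHom_iff.2 fun p ↦ ?_,
    fun g ↦ commute_flipOn_prodPermHom_iff.trans ⟨fun h ↦ ?_, fun hg p ↦ ?_⟩⟩
  · refine SemiconjBy.map (Equiv.ext fun p ↦ ?_) (prodPermHom _ Bool)
    obtain ⟨p, rfl⟩ := (e i).surjective p
    simp only [Equiv.Perm.mul_apply, translate_apply, ← e_mul, ← e'_mul, r_apply]
  · obtain ⟨p, rfl⟩ := (e i).surjective p
    rw [r_apply, e'_mem, e_mem, hK]
  · simpa [S, translate_apply] using h (1, Sum.inl 0)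
  · simp [S, translate_apply, K.mul_mem_cancel_left hg]

end Conjugators

/-! ### Systems of affine rules -/

theorem commute_iff_of_semiconjBy {P : Type*} [Group P] {s r a b : P} (hr : Commute s r)
    (h : SemiconjBy r a b) : Commute s a ↔ Commute s b := by
  have hs : r * s * r⁻¹ = s := mul_inv_eq_of_eq_mul hr.symm.eq
  have hb : r * a * r⁻¹ = b := mul_inv_eq_of_eq_mul h.eq
  rw [← hb, ← Commute.conj_iff r, hs]

section TranslationGroup

/-- The action of `A` on the free group over `Q × A` by translation of the generators. -/
def freeGroupTranslation (Q A : Type*) [AddGroup A] :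
    Multiplicative A →* MulAut (FreeGroup (Q × A)) where
  toFun a := FreeGroup.freeGroupCongr ((Equiv.refl Q).prodCongr (Equiv.addLeft a.toAdd))
  map_one' := MulEquiv.toMonoidHom_injective (FreeGroup.ext_hom _ _ fun p ↦ by simp)
  map_mul' a b := MulEquiv.toMonoidHom_injective
    (FreeGroup.ext_hom _ _ fun p ↦ by simp [Prod.map, add_assoc])

/-- The semidirect product of the free group over `Q × A` by the translations of `A`. It is the
free product of `A` and the free group over `Q`, the generators `(q, a)` being the conjugates
of `(q, 0)` by `a`. -/
abbrev TranslationGroup (Q A : Type*) [AddGroup A] : Type _ :=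
  FreeGroup (Q × A) ⋊[freeGroupTranslation Q A] Multiplicative A

variable {Q A X Y : Type*}

theorem TranslationGroup.conj_inr_inl_of [AddGroup A] (q : Q) (a : A) :
    MulAut.conj (SemidirectProduct.inr (.ofAdd a) : TranslationGroup Q A)
      (SemidirectProduct.inl (.of (q, 0))) = SemidirectProduct.inl (.of (q, a)) := by
  rw [MulAut.conj_apply, ← map_inv, ← SemidirectProduct.inl_aut]
  simp [freeGroupTranslation]

open scoped Classical in
/-- The exponent sum of the generators outside `S`. -/
noncomputable def exponentOutside (S : Set X) : FreeGroup X →* Multiplicative ℤ :=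
  FreeGroup.lift fun x ↦ if x ∈ S then 1 else .ofAdd 1

theorem exponentOutside_of_eq_one_iff {S : Set X} {x : X} :
    exponentOutside S (.of x) = 1 ↔ x ∈ S := by
  by_cases h : x ∈ S <;> simp [exponentOutside, h]

theorem exponentOutside_map (f : X → Y) (S : Set Y) (u : FreeGroup X) :
    exponentOutside S (FreeGroup.map f u) = exponentOutside (f ⁻¹' S) u :=
  DFunLike.congr_fun (FreeGroup.ext_hom ((exponentOutside S).comp (FreeGroup.map f))
    (exponentOutside (f ⁻¹' S)) fun _ ↦ rfl) u

/-- A subgroup of the free part of the translation group containing the generators in `S` and no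
other generator. As the kernel of an exponent sum it is easily pulled back along maps of generators,
unlike the subgroup generated by `S`. -/
noncomputable def generatorSubgroup [AddGroup A] (S : Set (Q × A)) :
    Subgroup (TranslationGroup Q A) :=
  (exponentOutside S).ker.map SemidirectProduct.inl

theorem inl_mem_generatorSubgroup_iff [AddGroup A] {S : Set (Q × A)} {u : FreeGroup (Q × A)} :
    (SemidirectProduct.inl u : TranslationGroup Q A) ∈ generatorSubgroup S ↔
      exponentOutside S u = 1 :=
  Subgroup.mem_map_iff_mem SemidirectProduct.inl_injective

end TranslationGroup

/-- An injective affine map `y ↦ (state, base + slope y)` from `A` to `Q × A`. -/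
structure AffineEmbedding (Q A : Type*) [AddCommGroup A] where
  state : Q
  base : A
  slope : A →+ A
  slope_injective : Injective slope

namespace AffineEmbedding

variable {Q A : Type*} [AddCommGroup A] (f : AffineEmbedding Q A)

/-- The map `y ↦ (state, base + slope y)`. -/
def toFun (y : A) : Q × A := (f.state, f.base + f.slope y)

instance : CoeFun (AffineEmbedding Q A) fun _ ↦ A → Q × A := ⟨toFun⟩

theorem injective : Injective f := fun _ _ h ↦
  f.slope_injective (add_left_cancel (Prod.mk.inj h).2)

/-- The endomorphism of translation groups acting as `f` on the generators and as its slope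
on the translations. -/
def translationHom : TranslationGroup Unit A →* TranslationGroup Q A :=
  SemidirectProduct.map (FreeGroup.map fun p ↦ f p.2) f.slope.toMultiplicative fun a ↦
    FreeGroup.ext_hom _ _ fun p ↦ by simp [freeGroupTranslation, toFun, add_left_comm]

theorem translationHom_injective : Injective f.translationHom := fun _ _ h ↦
  SemidirectProduct.ext
    (FreeGroup.map_injective (f.injective.comp (Equiv.punitProd A).injective)
      (congrArg SemidirectProduct.left h))
    (f.slope_injective (congrArg SemidirectProduct.right h))

theorem comap_translationHom_generatorSubgroup (S : Set (Q × A)) :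
    (generatorSubgroup S).comap f.translationHom =
      generatorSubgroup ((Equiv.punitProd A) ⁻¹' (f ⁻¹' S)) := by
  have inl_mem (u) : f.translationHom (.inl u) ∈ generatorSubgroup S ↔
      (SemidirectProduct.inl u : TranslationGroup Unit A) ∈
        generatorSubgroup ((Equiv.punitProd A) ⁻¹' (f ⁻¹' S)) := by
    rw [translationHom, SemidirectProduct.map_inl, inl_mem_generatorSubgroup_iff,
      exponentOutside_map, inl_mem_generatorSubgroup_iff]
    rfl
  ext w
  constructor
  · intro hw
    obtain ⟨u, -, hu⟩ := id hw
    have right_eq : w.right = 1 := f.slope_injective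
      ((congrArg SemidirectProduct.right hu).symm.trans (map_zero f.slope).symm)
    have hw_eq : SemidirectProduct.inl w.left = w := SemidirectProduct.ext rfl right_eq.symm
    rw [← hw_eq] at hw ⊢
    exact (inl_mem _).1 hw
  · intro hw
    obtain ⟨u, -, rfl⟩ := id hw
    exact (inl_mem u).2 hw

end AffineEmbedding

/-- The partial map `source y ↦ target y` between two affine cosets of `Q × A`. -/
structure AffineRule (Q A : Type*) [AddCommGroup A] where
  source : AffineEmbedding Q A
  target : AffineEmbedding Q A

section Model

variable {Q A P : Type*} [AddCommGroup A] [Group P]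

/-- The element `x(a) t(q) x(a)⁻¹` of a group representing the point `(q, a)`. -/
def pointElement (x : Multiplicative A →* P) (t : Q → P) (p : Q × A) : P :=
  MulAut.conj (x (.ofAdd p.2)) (t p.1)

theorem pointElement_add (x : Multiplicative A →* P) (t : Q → P) (q : Q) (a b : A) :
    pointElement x t (q, a + b) =
      x (.ofAdd b) * pointElement x t (q, a) * (x (.ofAdd b))⁻¹ := by
  rw [add_comm, pointElement, ofAdd_add, map_mul, map_mul, MulAut.mul_apply]
  rfl

/-- Elements of a group satisfying the relations attached to a system of affine rules: `r i`
conjugates the representatives of the source of the rule `i` to those of its target, and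
`s` commutes with every `r i`. -/
structure AffineRule.Model {I : Type*} (ρ : I → AffineRule Q A) (P : Type*) [Group P] where
  x : Multiplicative A →* P
  t : Q → P
  r : I → P
  s : P
  semiconj_slope : ∀ i y, SemiconjBy (r i)
    (x (.ofAdd ((ρ i).source.slope y))) (x (.ofAdd ((ρ i).target.slope y)))
  semiconj_base : ∀ i, SemiconjBy (r i)
    (pointElement x t ((ρ i).source.state, (ρ i).source.base))
    (pointElement x t ((ρ i).target.state, (ρ i).target.base))
  commute_r : ∀ i, Commute s (r i)

namespace AffineRule.Model

variable {I : Type*} {ρ : I → AffineRule Q A}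

/-- The set of points represented by elements commuting with `s`. -/
def centralizedPoints (m : Model ρ P) : Set (Q × A) :=
  {p | Commute m.s (pointElement m.x m.t p)}

theorem source_mem_centralizedPoints_iff (m : Model ρ P) (i : I) (y : A) :
    (ρ i).source y ∈ m.centralizedPoints ↔ (ρ i).target y ∈ m.centralizedPoints := by
  refine commute_iff_of_semiconjBy (m.commute_r i) ?_
  rw [AffineEmbedding.toFun, AffineEmbedding.toFun, pointElement_add, pointElement_add]
  exact ((m.semiconj_slope i y).mul_right (m.semiconj_base i)).mul_right
    (m.semiconj_slope i y).inv_right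

end AffineRule.Model

end Model

theorem AffineRule.exists_model_centralizedPoints_eq.{u, v} {Q : Type u} {A : Type v}
    [AddCommGroup A] [Countable Q] [Countable A] {I : Type*} (ρ : I → AffineRule Q A)
    {S : Set (Q × A)} (hS : ∀ i y, (ρ i).source y ∈ S ↔ (ρ i).target y ∈ S) :
    ∃ (P : Type (max u v)) (_ : Group P) (m : Model ρ P), m.centralizedPoints = S := by
  have : Countable (FreeGroup (Q × A)) := Quot.mk_surjective.countable
  have : Countable (Multiplicative A) := ‹Countable A›
  have : Countable (TranslationGroup Q A) := SemidirectProduct.equivProd.injective.countable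
  obtain ⟨P, _, j, r, s, hr, hsr, hs⟩ := exists_conjugators (generatorSubgroup S)
    (fun i ↦ (ρ i).source.translationHom_injective)
    (fun i ↦ (ρ i).target.translationHom_injective) fun i ↦ by
      simp only [AffineEmbedding.comap_translationHom_generatorSubgroup]
      exact congrArg (fun S' ↦ generatorSubgroup (Equiv.punitProd A ⁻¹' S')) (Set.ext (hS i))
  let x : Multiplicative A →* P := j.comp SemidirectProduct.inr
  let t (q : Q) : P := j (SemidirectProduct.inl (.of (q, 0)))
  have pointElement_eq (p : Q × A) :
      pointElement x t p = j (SemidirectProduct.inl (.of p)) := by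
    rw [← TranslationGroup.conj_inr_inl_of]
    simp [pointElement, x, t]
  refine ⟨P, inferInstance, ⟨x, t, r, s, fun i y ↦ ?_, fun i ↦ ?_, hsr⟩, Set.ext fun p ↦ ?_⟩
  · exact hr i (SemidirectProduct.inr (.ofAdd y))
  · simpa [pointElement_eq, AffineEmbedding.translationHom, AffineEmbedding.toFun] using
      hr i (SemidirectProduct.inl (.of ((), 0)))
  · change Commute s (pointElement x t p) ↔ p ∈ S
    rw [pointElement_eq, hs, inl_mem_generatorSubgroup_iff, exponentOutside_of_eq_one_iff]

/-! ### The group of a counter machine -/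

theorem exists_digit_add_mul (b : ℕ) [NeZero b] (a : ℤ) :
    ∃ (d : Fin b) (n : ℤ), a = (d : ℕ) + b * n := by
  obtain ⟨⟨n, d⟩, rfl⟩ := (Int.divModEquiv b).symm.surjective a
  refine ⟨d, n, ?_⟩
  rw [add_comm, mul_comm]
  rfl

/-- An instruction of a machine with states `Q` and integer registers `K`, written in base `b`. It
splits the register `key` as `d + b * n` with `d` a digit, replaces it by `add d + mul * n` and
moves to the state `next d`. -/
structure Instruction (b : ℕ) (Q K : Type*) where
  key : K
  next : Fin b → Q
  mul : ℤ
  add : Fin b → ℤ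
  mul_ne_zero : mul ≠ 0

namespace Instruction

variable {b : ℕ} [NeZero b] {Q K : Type*} [DecidableEq K]

/-- The new state and register contents after an instruction is executed. -/
def exec (I : Instruction b Q K) (a : K → ℤ) : Q × (K → ℤ) :=
  let (n, d) := Int.divModEquiv b (a I.key)
  (I.next d, update a I.key (I.add d + I.mul * n))

theorem exec_of_eq (I : Instruction b Q K) {a : K → ℤ} {d : Fin b} {n : ℤ}
    (h : a I.key = d + b * n) :
    I.exec a = (I.next d, update a I.key (I.add d + I.mul * n)) := by
  have divMod_eq : Int.divModEquiv b (a I.key) = (n, d) :=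
    ((Int.divModEquiv b).eq_symm_apply).1 <| by
      rw [h, add_comm, mul_comm]
      rfl
  simp only [exec, divMod_eq]

end Instruction

/-- A machine with states `Q` and integer registers `K`, given by its instructions. -/
abbrev CounterMachine (b : ℕ) (Q K : Type*) : Type _ := Q → Instruction b Q K

theorem exists_hom_ofAdd_single {K P : Type*} [Finite K] [DecidableEq K] [Group P] {g : K → P}
    (hg : ∀ k l, Commute (g k) (g l)) : ∃ x : Multiplicative (K → ℤ) →* P,
      ∀ k n, x (.ofAdd (Pi.single k n)) = g k ^ n := by
  have := Fintype.ofFinite K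
  let φ (k : K) : ℤ →+ Additive P := zmultiplesHom _ (.ofMul (g k))
  have hφ : Pairwise fun k l ↦ ∀ m n, AddCommute (φ k m) (φ l n) :=
    fun k l _ m n ↦ (hg k l).zpow_zpow m n
  exact ⟨AddMonoidHom.toMultiplicativeLeft (AddMonoidHom.noncommPiCoprod φ hφ),
    AddMonoidHom.noncommPiCoprod_single φ (hcomm := hφ)⟩

theorem map_ofAdd_single_mul {K P : Type*} [DecidableEq K] [Group P]
    (f : Multiplicative (K → ℤ) →* P) (k : K) (m n : ℤ) :
    f (.ofAdd (Pi.single k (m * n))) = f (.ofAdd (Pi.single k m)) ^ n := by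
  rw [← map_zpow, ← ofAdd_zsmul, ← Pi.single_smul, smul_eq_mul, mul_comm]

theorem map_ofAdd_single {K P : Type*} [DecidableEq K] [Group P]
    (f : Multiplicative (K → ℤ) →* P) (k : K) (n : ℤ) :
    f (.ofAdd (Pi.single k n)) = f (.ofAdd (Pi.single k 1)) ^ n := by
  rw [← map_ofAdd_single_mul, one_mul]

theorem semiconjBy_map_ofAdd_mul_of_single {K P : Type*} [Finite K] [DecidableEq K] [Group P]
    {f : Multiplicative (K → ℤ) →* P} {r : P} {a b : K → ℤ}
    (h : ∀ k, SemiconjBy r (f (.ofAdd (Pi.single k (a k)))) (f (.ofAdd (Pi.single k (b k)))))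
    (y : K → ℤ) : SemiconjBy r (f (.ofAdd (a * y))) (f (.ofAdd (b * y))) := by
  have := Fintype.ofFinite K
  induction y using Pi.single_induction with
  | zero => simp
  | add y z hy hz => simpa [mul_add] using hy.mul_right hz
  | single k n =>
    rw [← Pi.single_mul_right, ← Pi.single_mul_right, map_ofAdd_single_mul, map_ofAdd_single_mul]
    exact (h k).zpow_right n

/-- The affine map `y ↦ (q, y')` where `y'` is obtained from `y` by replacing the register `k` by
`d + c * y k`. -/
def registerEmbedding {Q K : Type*} [DecidableEq K] (q : Q) (k : K) (d : ℤ) {c : ℤ} (hc : c ≠ 0) :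
    AffineEmbedding Q (K → ℤ) where
  state := q
  base := Pi.single k d
  slope := AddMonoidHom.mulLeft (update 1 k c)
  slope_injective a a' h := funext fun l ↦ by
    have hl := congrFun h l
    rcases eq_or_ne l k with rfl | hlk <;> simp_all

theorem registerEmbedding_apply {Q K : Type*} [DecidableEq K] (q : Q) (k : K) (d : ℤ) {c : ℤ}
    (hc : c ≠ 0) (y : K → ℤ) :
    registerEmbedding q k d hc y = (q, update y k (d + c * y k)) := by
  refine Prod.ext rfl (funext fun l ↦ ?_)
  rcases eq_or_ne l k with rfl | hlk <;> simp [registerEmbedding, AffineEmbedding.toFun, *]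

namespace CounterMachine

/-- The generators of the group of a machine. -/
inductive Gen (b : ℕ) (Q K : Type*)
  | x (k : K)
  | t (q : Q)
  | r (i : Q × Fin b)
  | s

open Gen

instance {b : ℕ} {Q K : Type*} [Finite Q] [Finite K] : Finite (Gen b Q K) :=
  Finite.of_surjective (Sum.elim x (Sum.elim t (Sum.elim r fun _ : Unit ↦ s))) fun
    | x k => ⟨.inl k, rfl⟩
    | t q => ⟨.inr (.inl q), rfl⟩
    | r i => ⟨.inr (.inr (.inl i)), rfl⟩
    | s => ⟨.inr (.inr (.inr ())), rfl⟩

variable {b : ℕ} {Q K : Type*} [DecidableEq K] (M : CounterMachine b Q K)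

/-- The word representing the configuration of state `q` whose register `k` is `n`, the other
registers being zero. -/
def configWord (b : ℕ) {Q K : Type*} (q : Q) (k : K) (n : ℤ) : FreeGroup (Gen b Q K) :=
  .of (x k) ^ n * .of (t q) * (.of (x k) ^ n)⁻¹

theorem map_configWord {b : ℕ} {Q K P : Type*} [Group P] (f : FreeGroup (Gen b Q K) →* P) (q : Q)
    (k : K) (n : ℤ) :
    f (configWord b q k n) = MulAut.conj (f (.of (x k)) ^ n) (f (.of (t q))) := by
  rw [configWord, map_mul, map_mul, map_inv, map_zpow, MulAut.conj_apply]

/-- The relator expressing that `u` conjugates `v` to `w`. -/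
def semiconjRelator {G : Type*} [Group G] (u v w : G) : G := u * v * (w * u)⁻¹

theorem map_semiconjRelator_eq_one_iff {G P : Type*} [Group G] [Group P] (f : G →* P) {u v w : G} :
    f (semiconjRelator u v w) = 1 ↔ SemiconjBy (f u) (f v) (f w) := by
  simp [semiconjRelator, SemiconjBy, mul_inv_eq_one, -mul_inv_rev]

section Relators

variable (q₀ : Q) (k₀ : K) (n₀ : ℤ)

/-- The relators of the group of a machine with final configuration `(q₀, Pi.single k₀ n₀)`. -/
def relators : Set (FreeGroup (Gen b Q K)) :=
  (Set.range fun p : K × K ↦ ⁅FreeGroup.of (x p.1 : Gen b Q K), FreeGroup.of (x p.2)⁆) ∪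
  (Set.range fun p : (Q × Fin b) × K ↦ semiconjRelator (.of (r p.1))
    (.of (x p.2) ^ update (1 : K → ℤ) (M p.1.1).key b p.2)
    (.of (x p.2) ^ update (1 : K → ℤ) (M p.1.1).key (M p.1.1).mul p.2)) ∪
  (Set.range fun i : Q × Fin b ↦ semiconjRelator (.of (r i)) (configWord b i.1 (M i.1).key i.2)
    (configWord b ((M i.1).next i.2) (M i.1).key ((M i.1).add i.2))) ∪
  (Set.range fun i : Q × Fin b ↦ ⁅FreeGroup.of (s : Gen b Q K), FreeGroup.of (r i)⁆) ∪
  {⁅FreeGroup.of (s : Gen b Q K), configWord b q₀ k₀ n₀⁆}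

theorem finite_relators [Finite Q] [Finite K] : (M.relators q₀ k₀ n₀).Finite :=
  ((((Set.finite_range _).union (Set.finite_range _)).union (Set.finite_range _)).union
    (Set.finite_range _)).union (Set.finite_singleton _)

theorem forall_relators_map_eq_one_iff {P : Type*} [Group P] (f : FreeGroup (Gen b Q K) →* P) :
    (∀ u ∈ M.relators q₀ k₀ n₀, f u = 1) ↔
      (∀ k l, Commute (f (.of (x k))) (f (.of (x l)))) ∧
      (∀ i k, SemiconjBy (f (.of (r i)))
        (f (.of (x k)) ^ update (1 : K → ℤ) (M i.1).key b k)
        (f (.of (x k)) ^ update (1 : K → ℤ) (M i.1).key (M i.1).mul k)) ∧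
      (∀ i, SemiconjBy (f (.of (r i))) (f (configWord b i.1 (M i.1).key i.2))
        (f (configWord b ((M i.1).next i.2) (M i.1).key ((M i.1).add i.2)))) ∧
      (∀ i, Commute (f (.of s)) (f (.of (r i)))) ∧
      Commute (f (.of s)) (f (configWord b q₀ k₀ n₀)) := by
  simp only [relators, Set.union_singleton, Set.forall_mem_insert, Set.mem_union, or_imp,
    forall_and, Set.forall_mem_range, map_semiconjRelator_eq_one_iff, map_commutatorElement,
    map_zpow, commutatorElement_eq_one_iff_commute, Prod.forall]
  tauto

end Relators

variable [NeZero b]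

/-- One step of a machine on configurations. Machines never stop: halting means reaching a fixed
configuration. -/
def step (p : Q × (K → ℤ)) : Q × (K → ℤ) := (M p.1).exec p.2

/-- The run of the machine from the first configuration visits the second one. -/
def Reaches (p p' : Q × (K → ℤ)) : Prop := ∃ m, M.step^[m] p = p'

variable {M} in
theorem reaches_step_iff {p p₀ : Q × (K → ℤ)} (h₀ : M.step p₀ = p₀) :
    M.Reaches (M.step p) p₀ ↔ M.Reaches p p₀ := by
  constructor
  · rintro ⟨m, hm⟩
    exact ⟨m + 1, hm⟩
  · rintro ⟨m, hm⟩
    exact ⟨m, by rw [← iterate_succ_apply, iterate_succ_apply', hm, h₀]⟩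

/-- The affine rule describing the steps from a given state with a given least significant digit. -/
def rule (i : Q × Fin b) : AffineRule Q (K → ℤ) where
  source := registerEmbedding i.1 (M i.1).key i.2 (Int.natCast_ne_zero.2 (NeZero.ne b))
  target := registerEmbedding ((M i.1).next i.2) (M i.1).key ((M i.1).add i.2) (M i.1).mul_ne_zero

theorem step_source (i : Q × Fin b) (y : K → ℤ) :
    M.step ((M.rule i).source y) = (M.rule i).target y := by
  simp only [rule, registerEmbedding_apply, step]
  rw [Instruction.exec_of_eq _ (update_self ..), update_idem]

theorem exists_source_eq (p : Q × (K → ℤ)) : ∃ i y, (M.rule i).source y = p := by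
  obtain ⟨d, n, h⟩ := exists_digit_add_mul b (p.2 (M p.1).key)
  refine ⟨(p.1, d), update p.2 (M p.1).key n, ?_⟩
  simp [rule, registerEmbedding_apply, ← h]

section GroupOfMachine

variable {M} {P : Type*} [Group P]

/-- The images of the generators under a model of the rules of a machine. -/
def genValue (m : AffineRule.Model M.rule P) : Gen b Q K → P
  | x k => m.x (.ofAdd (Pi.single k 1))
  | t q => m.t q
  | r i => m.r i
  | s => m.s

theorem lift_genValue_configWord (m : AffineRule.Model M.rule P) (q : Q) (k : K) (n : ℤ) :
    FreeGroup.lift (genValue m) (configWord b q k n) =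
      pointElement m.x m.t (q, Pi.single k n) := by
  rw [map_configWord, FreeGroup.lift_apply_of, FreeGroup.lift_apply_of, pointElement,
    map_ofAdd_single]
  rfl

theorem forall_relators_lift_genValue_eq_one {q₀ : Q} {k₀ : K} {n₀ : ℤ}
    (m : AffineRule.Model M.rule P) (h : (q₀, Pi.single k₀ n₀) ∈ m.centralizedPoints) :
    ∀ u ∈ M.relators q₀ k₀ n₀, FreeGroup.lift (genValue m) u = 1 := by
  rw [forall_relators_map_eq_one_iff]
  simp only [lift_genValue_configWord, FreeGroup.lift_apply_of, genValue, ← map_ofAdd_single]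
  refine ⟨fun k l ↦ (Commute.all _ _).map m.x, fun i k ↦ ?_, m.semiconj_base, m.commute_r, h⟩
  simpa [rule, registerEmbedding, ← Pi.single_mul_right] using m.semiconj_slope i (Pi.single k 1)

theorem exists_model_of_forall_relators [Finite K] {q₀ : Q} {k₀ : K} {n₀ : ℤ}
    {f : FreeGroup (Gen b Q K) →* P} (hf : ∀ u ∈ M.relators q₀ k₀ n₀, f u = 1) :
    ∃ m : AffineRule.Model M.rule P, FreeGroup.lift (genValue m) = f ∧
      (q₀, Pi.single k₀ n₀) ∈ m.centralizedPoints := by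
  rw [forall_relators_map_eq_one_iff] at hf
  obtain ⟨comm_x, semiconj_x, semiconj_base, comm_r, comm_config⟩ := hf
  obtain ⟨X, hX⟩ := exists_hom_ofAdd_single comm_x
  have map_configWord_eq (q : Q) (k : K) (n : ℤ) : f (configWord b q k n) =
      pointElement X (fun q ↦ f (.of (t q))) (q, Pi.single k n) := by
    rw [map_configWord, pointElement, hX]
  simp only [map_configWord_eq] at semiconj_base comm_config
  refine ⟨⟨X, fun q ↦ f (.of (t q)), fun i ↦ f (.of (r i)), f (.of s), fun i y ↦ ?_,
    semiconj_base, comm_r⟩, FreeGroup.ext_hom _ _ fun g ↦ ?_, comm_config⟩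
  · refine semiconjBy_map_ofAdd_mul_of_single (fun k ↦ ?_) y
    simpa only [hX] using semiconj_x i k
  · cases g <;> simp [genValue, hX]

end GroupOfMachine

theorem Reaches.mem_of_invariant {p p₀ : Q × (K → ℤ)} (h : M.Reaches p p₀) {S : Set (Q × (K → ℤ))}
    (hS : ∀ i y, (M.rule i).source y ∈ S ↔ (M.rule i).target y ∈ S) (h₀ : p₀ ∈ S) : p ∈ S := by
  obtain ⟨m, rfl⟩ := h
  induction m generalizing p with
  | zero => exact h₀
  | succ m ih =>
    obtain ⟨i, y, rfl⟩ := M.exists_source_eq p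
    rw [hS, ← step_source]
    exact ih h₀

theorem commutator_mem_normalClosure_relators_iff [Countable Q] [Finite K] {q₀ : Q} {k₀ : K}
    {n₀ : ℤ} (h₀ : M.step (q₀, Pi.single k₀ n₀) = (q₀, Pi.single k₀ n₀)) (q : Q) (k : K) (n : ℤ) :
    ⁅FreeGroup.of (s : Gen b Q K), configWord b q k n⁆ ∈
        Subgroup.normalClosure (M.relators q₀ k₀ n₀) ↔
      M.Reaches (q, Pi.single k n) (q₀, Pi.single k₀ n₀) := by
  have lift_eq_one_iff {P : Type _} [Group P] (m : AffineRule.Model M.rule P) :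
      FreeGroup.lift (genValue m) ⁅FreeGroup.of (s : Gen b Q K), configWord b q k n⁆ = 1 ↔
        (q, Pi.single k n) ∈ m.centralizedPoints := by
    rw [map_commutatorElement, commutatorElement_eq_one_iff_commute, lift_genValue_configWord,
      FreeGroup.lift_apply_of]
    rfl
  constructor
  · intro hmem
    obtain ⟨P, _, m, hm⟩ := AffineRule.exists_model_centralizedPoints_eq M.rule
      (S := {p | M.Reaches p (q₀, Pi.single k₀ n₀)}) fun i y ↦ by
        rw [← step_source]
        exact (reaches_step_iff h₀).symm
    have : Subgroup.normalClosure (M.relators q₀ k₀ n₀) ≤ (FreeGroup.lift (genValue m)).ker :=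
      Subgroup.normalClosure_le_normal <| forall_relators_lift_genValue_eq_one m <| by
        rw [hm]
        exact ⟨0, rfl⟩
    exact hm.subset ((lift_eq_one_iff m).1 (this hmem))
  · intro hreach
    obtain ⟨m, hm, hm₀⟩ := exists_model_of_forall_relators (M := M)
      (f := PresentedGroup.mk (M.relators q₀ k₀ n₀))
      fun u hu ↦ PresentedGroup.one_of_mem hu
    rw [← PresentedGroup.mk_eq_one_iff, ← hm, lift_eq_one_iff]
    exact hreach.mem_of_invariant M m.source_mem_centralizedPoints_iff hm₀

end CounterMachine

/-! ### Simulating machines with stacks -/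

namespace CounterMachine

variable {b : ℕ} [NeZero b] {Q K : Type*} [DecidableEq K]

/-- The restriction of a machine to a set of states closed under its transitions. -/
def restrict (M : CounterMachine b Q K) (T : Set Q) (hT : ∀ q ∈ T, ∀ d, (M q).next d ∈ T) :
    CounterMachine b T K :=
  fun q ↦ { M q with next := fun d ↦ ⟨(M q).next d, hT q q.2 d⟩ }

theorem reaches_restrict_iff (M : CounterMachine b Q K) {T : Set Q}
    (hT : ∀ q ∈ T, ∀ d, (M q).next d ∈ T) (p p' : T × (K → ℤ)) :
    (M.restrict T hT).Reaches p p' ↔ M.Reaches (p.1, p.2) (p'.1, p'.2) := by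
  have semiconj : Semiconj (Prod.map Subtype.val id) (M.restrict T hT).step M.step := fun _ ↦ rfl
  have inj : Injective (Prod.map (Subtype.val : T → Q) (id : (K → ℤ) → K → ℤ)) :=
    Subtype.val_injective.prodMap injective_id
  refine exists_congr fun m ↦ ?_
  rw [← inj.eq_iff, (semiconj.iterate_right m).eq]
  rfl

end CounterMachine

theorem mem_eval_map_iff_exists_iterate {α β : Type*} {g : α → α} {o : α → Option β}
    (hg : ∀ a, o a = none → g a = a) {a b : α} (hb : o b = none) :
    b ∈ StateTransition.eval (fun a ↦ (o a).map fun _ ↦ g a) a ↔ ∃ m, g^[m] a = b := by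
  simp only [StateTransition.mem_eval, hb, Option.map_none, and_true]
  constructor
  · intro h
    induction h using Relation.ReflTransGen.head_induction_on with
    | refl => exact ⟨0, rfl⟩
    | head h _ ih =>
      obtain ⟨_, -, rfl⟩ := Option.mem_map.1 h
      obtain ⟨m, hm⟩ := ih
      exact ⟨m + 1, hm⟩
  · rintro ⟨m, hm⟩
    induction m generalizing a with
    | zero =>
      cases hm
      exact .refl
    | succ m ih =>
      specialize ih hm
      rcases ha : o a with - | x
      · rwa [hg a ha] at ih
      · exact ih.head (Option.mem_map.2 ⟨x, ha, rfl⟩)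

section StackCode

variable {Γ : Type*} {c : ℕ} (e : Γ ≃ Fin c)

/-- The digit representing the top symbol of a stack; the digit `0` stands for the empty stack. -/
def topDigit : Option Γ ≃ Fin (c + 1) := e.optionCongr.trans (finSuccEquiv c).symm

/-- The number whose digits in base `c + 1`, starting from the least significant one, are the
symbols of a stack, starting from the top. -/
def stackCode : List Γ → ℕ
  | [] => 0
  | g :: l => topDigit e (some g) + (c + 1) * stackCode l

theorem stackCode_eq (l : List Γ) :
    stackCode e l = topDigit e l.head? + (c + 1) * stackCode e l.tail := by
  cases l with
  | nil => simp [stackCode, topDigit]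
  | cons g l => rfl

theorem stackCode_comp_update {K : Type*} [DecidableEq K] (S : K → List Γ) (k : K) (l : List Γ) :
    (fun k' ↦ (stackCode e (update S k l k') : ℤ)) =
      update (fun k' ↦ (stackCode e (S k') : ℤ)) k (stackCode e l) :=
  funext fun k' ↦ apply_update (fun _ l ↦ (stackCode e l : ℤ)) S k l k'

theorem cast_stackCode_eq (l : List Γ) : (stackCode e l : ℤ) =
    (topDigit e l.head? : ℕ) + (c + 1 : ℕ) * (stackCode e l.tail : ℤ) :=
  mod_cast stackCode_eq e l

end StackCode

namespace Instruction

variable {b : ℕ} [NeZero b] {Q K : Type*}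

/-- The instruction reading the last digit of a register without modifying it. -/
def read (k : K) (next : Fin b → Q) : Instruction b Q K where
  key := k
  next := next
  mul := b
  add d := (d : ℕ)
  mul_ne_zero := Int.natCast_ne_zero.2 (NeZero.ne b)

/-- The instruction moving to a given state. The register read is immaterial. -/
def jump [Inhabited K] (q : Q) : Instruction b Q K := read default fun _ ↦ q

variable [DecidableEq K]

theorem exec_read (k : K) (next : Fin b → Q) {a : K → ℤ} {d : Fin b} {n : ℤ}
    (h : a k = d + b * n) : (read k next).exec a = (next d, a) := by
  rw [exec_of_eq (read k next) h]
  exact Prod.ext rfl (update_eq_iff.2 ⟨h.symm, fun _ _ ↦ rfl⟩)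

theorem exec_jump [Inhabited K] (q : Q) (a : K → ℤ) :
    (jump q : Instruction b Q K).exec a = (q, a) := by
  obtain ⟨d, n, h⟩ := exists_digit_add_mul b (a default)
  exact exec_read _ _ h

end Instruction

namespace CounterMachine

open Turing

variable {Γ Λ σ K : Type*} {c : ℕ} (e : Γ ≃ Fin c) [Inhabited K]

/-- The machine simulating a machine with finitely many stacks: its states are the statements still
to be executed (`none` after halting) together with the internal state, and its registers are the
codes of the stacks. -/
def ofTM2 (M : Λ → TM2.Stmt (fun _ : K ↦ Γ) Λ σ) :
    CounterMachine (c + 1) (Option (TM2.Stmt (fun _ : K ↦ Γ) Λ σ) × σ) K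
  | (some (.push k f q), v) =>
    { key := k
      next := fun _ ↦ (some q, v)
      mul := (c + 1) ^ 2
      add := fun d ↦ topDigit e (some (f v)) + (c + 1) * (d : ℕ)
      mul_ne_zero := by positivity }
  | (some (.peek k f q), v) => .read k fun d ↦ (some q, f v ((topDigit e).symm d))
  | (some (.pop k f q), v) =>
    { key := k
      next := fun d ↦ (some q, f v ((topDigit e).symm d))
      mul := 1
      add := fun _ ↦ 0
      mul_ne_zero := one_ne_zero }
  | (some (.load f q), v) => .jump (some q, f v)
  | (some (.branch f q₁ q₂), v) => .jump (some (cond (f v) q₁ q₂), v)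
  | (some (.goto f), v) => .jump (some (M (f v)), v)
  | (some .halt, v) => .jump (none, v)
  | (none, v) => .jump (none, v)

theorem finite_setOf_fst_mem_stmts {Λ σ K : Type*} [Finite σ] {Γ : K → Type*}
    (M : Λ → TM2.Stmt Γ Λ σ) (S : Finset Λ) :
    {p : Option (TM2.Stmt Γ Λ σ) × σ | p.1 ∈ TM2.stmts M S}.Finite :=
  ((TM2.stmts M S).finite_toSet.prod Set.finite_univ).subset fun _ hp ↦ ⟨hp, trivial⟩

theorem some_mem_stmts {Λ σ K : Type*} {Γ : K → Type*} (M : Λ → TM2.Stmt Γ Λ σ) {S : Finset Λ}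
    {l : Λ} (hl : l ∈ S) : some (M l) ∈ TM2.stmts M S := by
  classical
  exact Finset.some_mem_insertNone.2 (Finset.mem_biUnion.2 ⟨l, hl, TM2.stmts₁_self⟩)

theorem next_mem_stmts [Inhabited Λ] {M : Λ → TM2.Stmt (fun _ : K ↦ Γ) Λ σ}
    {S : Finset Λ} (hS : TM2.Supports M S)
    (p : Option (TM2.Stmt (fun _ : K ↦ Γ) Λ σ) × σ) (hp : p.1 ∈ TM2.stmts M S) (d : Fin (c + 1)) :
    ((ofTM2 e M p).next d).1 ∈ TM2.stmts M S := by
  have none_mem : none ∈ TM2.stmts M S := Finset.none_mem_insertNone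
  obtain ⟨_ | q, v⟩ := p
  · exact none_mem
  have stmts_of_mem {q'} (hq' : q' ∈ TM2.stmts₁ q) : some q' ∈ TM2.stmts M S :=
    TM2.stmts_trans hq' hp
  cases q with
  | goto f => exact some_mem_stmts M (TM2.stmts_supportsStmt hS hp v)
  | halt => exact none_mem
  | branch f q₁ q₂ =>
    simp only [ofTM2, Instruction.jump, Instruction.read]
    cases f v
    · exact stmts_of_mem (by simp [TM2.stmts₁, TM2.stmts₁_self])
    · exact stmts_of_mem (by simp [TM2.stmts₁, TM2.stmts₁_self])
  | _ => exact stmts_of_mem (by simp [TM2.stmts₁, TM2.stmts₁_self])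

/-- The configuration of `ofTM2 e M` with state `(q, v)` and stacks `S`. -/
def stackConfig (q : Option (TM2.Stmt (fun _ : K ↦ Γ) Λ σ)) (v : σ) (S : K → List Γ) :
    (Option (TM2.Stmt (fun _ : K ↦ Γ) Λ σ) × σ) × (K → ℤ) :=
  ((q, v), fun k ↦ stackCode e (S k))

variable [DecidableEq K] (M : Λ → TM2.Stmt (fun _ : K ↦ Γ) Λ σ)

theorem step_stackConfig_push (k : K) (f : σ → Γ) (q : TM2.Stmt (fun _ : K ↦ Γ) Λ σ) (v : σ)
    (S : K → List Γ) : (ofTM2 e M).step (stackConfig e (some (.push k f q)) v S) =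
      stackConfig e (some q) v (update S k (f v :: S k)) := by
  refine (Instruction.exec_of_eq _ (cast_stackCode_eq e (S k))).trans (Prod.ext rfl ?_)
  simp only [stackConfig, stackCode_comp_update]
  refine congrArg (update _ k) ?_
  simp only [ofTM2, stackCode, stackCode_eq e (S k)]
  push_cast
  ring

theorem step_stackConfig_peek (k : K) (f : σ → Option Γ → σ)
    (q : TM2.Stmt (fun _ : K ↦ Γ) Λ σ) (v : σ) (S : K → List Γ) :
    (ofTM2 e M).step (stackConfig e (some (.peek k f q)) v S) =
      stackConfig e (some q) (f v (S k).head?) S := by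
  refine (Instruction.exec_read (a := fun k ↦ (stackCode e (S k) : ℤ)) k _
    (cast_stackCode_eq e (S k))).trans ?_
  rw [Equiv.symm_apply_apply]
  rfl

theorem step_stackConfig_pop (k : K) (f : σ → Option Γ → σ)
    (q : TM2.Stmt (fun _ : K ↦ Γ) Λ σ) (v : σ) (S : K → List Γ) :
    (ofTM2 e M).step (stackConfig e (some (.pop k f q)) v S) =
      stackConfig e (some q) (f v (S k).head?) (update S k (S k).tail) := by
  refine (Instruction.exec_of_eq _ (cast_stackCode_eq e (S k))).trans ?_
  simp only [stackConfig, stackCode_comp_update]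
  simp [ofTM2]

/-- The configuration of `ofTM2 e M` representing a configuration of `M`. -/
def ofTM2Config (a : TM2.Cfg (fun _ : K ↦ Γ) Λ σ) :
    (Option (TM2.Stmt (fun _ : K ↦ Γ) Λ σ) × σ) × (K → ℤ) :=
  stackConfig e (a.l.map M) a.var a.stk

theorem reaches₁_stepAux (q : TM2.Stmt (fun _ : K ↦ Γ) Λ σ) (v : σ) (S : K → List Γ) :
    StateTransition.Reaches₁ (fun p ↦ p.1.1.map fun _ ↦ (ofTM2 e M).step p)
      (stackConfig e (some q) v S) (ofTM2Config e M (TM2.stepAux q v S)) := by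
  induction q generalizing v S with
  | push k f q ih => exact (ih _ _).head (congrArg some (step_stackConfig_push ..))
  | peek k f q ih => exact (ih _ _).head (congrArg some (step_stackConfig_peek ..))
  | pop k f q ih => exact (ih _ _).head (congrArg some (step_stackConfig_pop ..))
  | load f q ih => exact (ih _ _).head (congrArg some (Instruction.exec_jump ..))
  | branch f q₁ q₂ ih₁ ih₂ =>
    refine Relation.TransGen.head (congrArg some (Instruction.exec_jump ..)) ?_
    rw [TM2.stepAux]
    cases f v
    · exact ih₂ v S
    · exact ih₁ v S
  | goto f => exact .single (congrArg some (Instruction.exec_jump ..))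
  | halt => exact .single (congrArg some (Instruction.exec_jump ..))

theorem reaches_ofTM2Config_iff {a a' : TM2.Cfg (fun _ : K ↦ Γ) Λ σ} (ha' : a'.l = none) :
    (ofTM2 e M).Reaches (ofTM2Config e M a) (ofTM2Config e M a') ↔
      ofTM2Config e M a' ∈ ofTM2Config e M <$> StateTransition.eval (TM2.step M) a := by
  rw [← StateTransition.tr_eval' _ (fun p ↦ p.1.1.map fun _ ↦ (ofTM2 e M).step p),
    mem_eval_map_iff_exists_iterate]
  · rfl
  · rintro ⟨⟨_ | _, v⟩, y⟩ h
    · exact Instruction.exec_jump ..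
    · cases h
  · simp [ofTM2Config, stackConfig, ha']
  · rw [StateTransition.fun_respects]
    rintro ⟨_ | l, v, S⟩
    · rfl
    · exact reaches₁_stepAux e M (M l) v S

end CounterMachine

section PartrecMachine

open Turing PartrecToTM2 CounterMachine

theorem trNat_of_ne_zero {n : ℕ} (hn : n ≠ 0) :
    trNat n = (if n % 2 = 1 then .bit1 else .bit0) :: trNat (n / 2) := by
  have trNat_cast (p : PosNum) : trNat p = trPosNum p := by
    rw [trNat, PosNum.of_to_nat, trNum]
  obtain ⟨p, rfl⟩ : ∃ p : PosNum, (p : ℕ) = n := by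
    have cast_cast : ((n : Num) : ℕ) = n := Num.to_of_nat n
    cases h : (n : Num) with
    | zero => exact absurd (cast_cast.symm.trans (congrArg _ h)) hn
    | pos p => exact ⟨p, (congrArg _ h).symm.trans cast_cast⟩
  cases p with
  | one => simp [trNat, trNum, trPosNum]
  | bit0 p =>
    rw [trNat_cast, show ((p.bit0 : PosNum) : ℕ) = 2 * p by rw [PosNum.cast_bit0]; ring]
    simp [trPosNum, trNat_cast]
  | bit1 p =>
    rw [trNat_cast, show ((p.bit1 : PosNum) : ℕ) = 2 * p + 1 by rw [PosNum.cast_bit1]; ring]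
    simp [trPosNum, trNat_cast, Nat.mul_add_div]

theorem primrec_of_forall_eq_add_mul_div_two {f g : ℕ → ℕ} {b : ℕ} (hg : Primrec g)
    (hf : ∀ n ≠ 0, f n = g n + b * f (n / 2)) : Primrec f := by
  have primrec_step : Primrec₂ fun (_ : Unit) (l : List ℕ) ↦
      some (if l.length = 0 then f 0 else g l.length + b * l.getD (l.length / 2) 0) := by
    have length : Primrec fun p : Unit × List ℕ ↦ p.2.length := Primrec.list_length.comp .snd
    exact Primrec.option_some.comp <| .ite (Primrec.eq.comp length (.const 0)) (.const _) <|
      Primrec.nat_add.comp (hg.comp length) <| Primrec.nat_mul.comp (.const b) <|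
        (Primrec.list_getD 0).comp .snd (Primrec.nat_div.comp length (.const 2))
  refine (Primrec.nat_strong_rec (fun _ : Unit ↦ f) primrec_step fun _ n ↦ ?_).comp (.const ()) .id
  rcases eq_or_ne n 0 with rfl | hn
  · simp
  · have : n / 2 < n := Nat.div_lt_self (Nat.pos_of_ne_zero hn) one_lt_two
    simp [hn, hf n hn, this]

theorem primrec_stackCode_trList {c : ℕ} (e : Γ' ≃ Fin c) :
    Primrec fun n ↦ stackCode e (trList [n]) := by
  refine primrec_of_forall_eq_add_mul_div_two (b := c + 1)
    (g := fun n ↦ if n % 2 = 1 then (topDigit e (some .bit1) : ℕ) else topDigit e (some .bit0))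
    (.ite (Primrec.eq.comp (Primrec.nat_mod.comp .id (.const 2)) (.const 1)) (.const _) (.const _))
    fun n hn ↦ ?_
  rw [trList, trNat_of_ne_zero hn, List.cons_append, stackCode]
  split <;> rfl

theorem stackCode_elim_main {c : ℕ} (e : Γ' ≃ Fin c) (l : List Γ') :
    (fun k ↦ (stackCode e (K'.elim l [] [] [] k) : ℤ)) = Pi.single K'.main (stackCode e l : ℤ) :=
  funext fun k ↦ by cases k <;> simp [stackCode]

theorem reaches_ofTM2_tr_iff {c : ℕ} (e : Γ' ≃ Fin c) {code : ToPartrec.Code} {v v₀ : List ℕ}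
    (hv : ∀ w ∈ code.eval v, w = v₀) :
    (ofTM2 e tr).Reaches
      ((some (tr (trNormal code .halt)), none), Pi.single K'.main (stackCode e (trList v) : ℤ))
      ((none, none), Pi.single K'.main (stackCode e (trList v₀) : ℤ)) ↔ (code.eval v).Dom := by
  have init_eq : ofTM2Config e tr (init code v) =
      ((some (tr (trNormal code .halt)), none), Pi.single K'.main (stackCode e (trList v) : ℤ)) :=
    Prod.ext rfl (stackCode_elim_main e _)
  have halt_eq : ofTM2Config e tr (halt v₀) =
      ((none, none), Pi.single K'.main (stackCode e (trList v₀) : ℤ)) :=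
    Prod.ext rfl (stackCode_elim_main e _)
  have reaches_iff := reaches_ofTM2Config_iff e tr (a := init code v) (a' := halt v₀) rfl
  rw [tr_eval, init_eq, halt_eq] at reaches_iff
  refine reaches_iff.trans ⟨?_, ?_⟩
  · rintro ⟨dom, -⟩
    exact dom
  · intro dom
    have eval_mem : v₀ ∈ code.eval v := hv _ (Part.get_mem dom) ▸ Part.get_mem dom
    exact halt_eq ▸ Part.mem_map (ofTM2Config e tr) (Part.mem_map halt eval_mem)

theorem exists_code_undecidable_dom : ∃ c : ToPartrec.Code,
    (∀ n, ∀ v ∈ c.eval [n], v = [0]) ∧ ¬ ComputablePred fun n ↦ (c.eval [n]).Dom := by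
  -- Discarding the output makes the halting configuration unique.
  let f : ℕ →. ℕ := fun n ↦ ((Denumerable.ofNat Nat.Partrec.Code n).eval 0).map fun _ ↦ 0
  have partrec_f : Partrec f :=
    (Nat.Partrec.Code.eval_part.comp (Computable.ofNat _) (.const 0)).map (Computable.const 0).to₂
  obtain ⟨c, hc⟩ := ToPartrec.Code.exists_code (Nat.Partrec'.part_iff₁.2 partrec_f)
  replace hc (n : ℕ) : c.eval [n] = pure <$> f n := hc (n ::ᵥ .nil)
  refine ⟨c, fun n v hv ↦ ?_, fun H ↦ ComputablePred.halting_problem 0 ?_⟩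
  · rw [hc] at hv
    obtain ⟨m, hm, rfl⟩ := (Part.mem_map_iff _).1 hv
    obtain ⟨-, -, rfl⟩ := (Part.mem_map_iff _).1 hm
    rfl
  · refine H.computable_of_manyOneReducible ⟨Encodable.encode, Computable.encode, fun d ↦ ?_⟩
    simp [hc, f]

theorem exists_counterMachine_undecidable_reaches :
    ∃ (b : ℕ) (_ : NeZero b) (Q K : Type) (_ : Finite Q) (_ : Finite K) (_ : DecidableEq K)
      (M : CounterMachine b Q K) (q q₀ : Q) (k : K) (n₀ : ℤ) (u : ℕ → ℕ),
      M.step (q₀, Pi.single k n₀) = (q₀, Pi.single k n₀) ∧ Computable u ∧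
        ¬ ComputablePred fun n ↦ M.Reaches (q, Pi.single k (u n : ℤ)) (q₀, Pi.single k n₀) := by
  obtain ⟨code, eval_eq, undecidable⟩ := exists_code_undecidable_dom
  let e := Fintype.equivFin Γ'
  let _ : Inhabited Λ' := ⟨trNormal code .halt⟩
  have supports : TM2.Supports tr (codeSupp code .halt) := tr_supports code .halt
  let T := {p : Option (TM2.Stmt _ _ _) × Option Γ' | p.1 ∈ TM2.stmts tr (codeSupp code .halt)}
  have : Finite T := finite_setOf_fst_mem_stmts tr _
  have : Finite K' := Finite.of_surjective ![.main, .rev, .aux, .stack] fun k ↦ by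
    cases k
    exacts [⟨0, rfl⟩, ⟨1, rfl⟩, ⟨2, rfl⟩, ⟨3, rfl⟩]
  let M := (ofTM2 e tr).restrict T (next_mem_stmts e supports)
  refine ⟨_, inferInstance, T, K', inferInstance, inferInstance, inferInstance, M,
    ⟨(some (tr (trNormal code .halt)), none), some_mem_stmts tr supports.1⟩,
    ⟨(none, none), Finset.none_mem_insertNone⟩, .main, stackCode e (trList [0]),
    fun n ↦ stackCode e (trList [n]), ?_, (primrec_stackCode_trList e).to_comp, ?_⟩
  · exact Prod.ext (Subtype.ext rfl) (congrArg Prod.snd (Instruction.exec_jump ..))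
  · simpa only [M, reaches_restrict_iff, reaches_ofTM2_tr_iff e (eval_eq _)] using undecidable

end PartrecMachine

/-! ### Computable families of words -/

/-- A family of elements of a free group is computable if it is represented by a computable family
of (not necessarily reduced) words. -/
def IsComputableFamily {α Y : Type*} [Primcodable α] [Primcodable Y] (u : α → FreeGroup Y) : Prop :=
  ∃ w : α → List (Y × Bool), Computable w ∧ ∀ a, FreeGroup.mk (w a) = u a

namespace IsComputableFamily

variable {α X Y : Type*} [Primcodable α] [Primcodable X] [Primcodable Y] {u v : α → FreeGroup Y}

theorem const (g : FreeGroup Y) : IsComputableFamily fun _ : α ↦ g := by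
  obtain ⟨l, rfl⟩ := Quot.exists_rep g
  exact ⟨fun _ ↦ l, .const l, fun _ ↦ rfl⟩

theorem mul (hu : IsComputableFamily u) (hv : IsComputableFamily v) :
    IsComputableFamily fun a ↦ u a * v a := by
  obtain ⟨w, hw, mk_w⟩ := hu
  obtain ⟨w', hw', mk_w'⟩ := hv
  exact ⟨fun a ↦ w a ++ w' a, Computable.list_append.comp hw hw', fun a ↦
    FreeGroup.mul_mk.symm.trans (congrArg₂ _ (mk_w a) (mk_w' a))⟩

theorem inv (hu : IsComputableFamily u) : IsComputableFamily fun a ↦ (u a)⁻¹ := by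
  obtain ⟨w, hw, mk_w⟩ := hu
  have invRev : Primrec fun l : List (Y × Bool) ↦ FreeGroup.invRev l :=
    Primrec.list_reverse.comp <| Primrec.list_map .id <|
      (Primrec.fst.comp .snd).pair (Primrec.not.comp (Primrec.snd.comp .snd))
  exact ⟨fun a ↦ FreeGroup.invRev (w a), invRev.to_comp.comp hw, fun a ↦
    FreeGroup.inv_mk.symm.trans (congrArg _ (mk_w a))⟩

theorem pow (hu : IsComputableFamily u) {n : α → ℕ} (hn : Computable n) :
    IsComputableFamily fun a ↦ u a ^ n a := by
  obtain ⟨w, hw, mk_w⟩ := hu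
  let power (a : α) (m : ℕ) : List (Y × Bool) := Nat.rec [] (fun _ l ↦ l ++ w a) m
  have mk_power (a : α) (m : ℕ) : FreeGroup.mk (power a m) = u a ^ m := by
    induction m with
    | zero => rfl
    | succ m ih => rw [pow_succ, ← ih, ← mk_w, FreeGroup.mul_mk]
  exact ⟨fun a ↦ power a (n a), Computable.nat_rec hn (.const []) <|
    (Computable.list_append.comp (Computable.snd.comp .snd) (hw.comp .fst)).to₂,
    fun a ↦ mk_power a _⟩

theorem map [Finite X] {u : α → FreeGroup X} (hu : IsComputableFamily u)
    (φ : FreeGroup X →* FreeGroup Y) : IsComputableFamily fun a ↦ φ (u a) := by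
  obtain ⟨w, hw, mk_w⟩ := hu
  choose letter mk_letter using fun p : X × Bool ↦ Quot.exists_rep (φ (FreeGroup.mk [p]))
  have primrec_flatMap : Primrec fun l : List (X × Bool) ↦ l.flatMap letter :=
    Primrec.list_flatMap .id ((Primrec.dom_finite letter).comp .snd)
  have mk_flatMap (l : List (X × Bool)) : FreeGroup.mk (l.flatMap letter) = φ (FreeGroup.mk l) := by
    induction l with
    | nil => exact (map_one φ).symm
    | cons p l ih =>
      calc FreeGroup.mk (letter p ++ l.flatMap letter)
          = FreeGroup.mk (letter p) * FreeGroup.mk (l.flatMap letter) := FreeGroup.mul_mk.symm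
        _ = φ (FreeGroup.mk [p]) * φ (FreeGroup.mk l) := congrArg₂ _ (mk_letter p) ih
        _ = φ (FreeGroup.mk (p :: l)) := by rw [← map_mul, FreeGroup.mul_mk, List.singleton_append]
  exact ⟨fun a ↦ (w a).flatMap letter, primrec_flatMap.to_comp.comp hw, fun a ↦ by
    rw [mk_flatMap, mk_w]⟩

open CounterMachine in
theorem commutator_configWord {b : ℕ} {Q K : Type*} [Primcodable (Gen b Q K)]
    (q : Q) (k : K) {n : α → ℕ} (hn : Computable n) :
    IsComputableFamily fun a ↦
      ⁅FreeGroup.of (.s : Gen b Q K), configWord b q k (n a)⁆ := by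
  have pow_x : IsComputableFamily fun a ↦
      FreeGroup.of (.x k : Gen b Q K) ^ (n a : ℤ) := by
    simpa only [zpow_natCast] using (const _).pow hn
  have config := (pow_x.mul (const (FreeGroup.of (.t q)))).mul pow_x.inv
  exact (((const _).mul config).mul (const _)).mul config.inv

end IsComputableFamily

/-- The **Novikov–Boone theorem**: some finitely presented group has undecidable word problem. -/
theorem exists_undecidable_word_problem :
    ∃ (X : Type) (_ : Finite X) (_ : Primcodable X) (R : Set (FreeGroup X)), R.Finite ∧
      ¬ ComputablePred fun w : List (X × Bool) ↦ FreeGroup.mk w ∈ Subgroup.normalClosure R := by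
  obtain ⟨b, _, Q, K, _, _, _, M, q, q₀, k, n₀, u, step_halt, computable_u, undecidable⟩ :=
    exists_counterMachine_undecidable_reaches
  let _ : Primcodable (CounterMachine.Gen b Q K) := .ofEquiv _ (Finite.equivFin _)
  obtain ⟨w, computable_w, mk_w⟩ :=
    IsComputableFamily.commutator_configWord (b := b) q k computable_u
  refine ⟨_, inferInstance, inferInstance, M.relators q₀ k n₀, M.finite_relators q₀ k n₀,
    fun H ↦ undecidable (H.computable_of_manyOneReducible ⟨w, computable_w, fun n ↦ ?_⟩)⟩
  rw [mk_w, M.commutator_mem_normalClosure_relators_iff step_halt]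

/-! ### Mihailova's subgroup -/

theorem exists_injective_freeGroupHom (X Y : Type*) [Countable X] [Nontrivial Y] :
    ∃ φ : FreeGroup X →* FreeGroup Y, Injective φ := by
  classical
  obtain ⟨e, injective_e⟩ := exists_injective_nat X
  obtain ⟨a, b, hab⟩ := exists_pair_ne Y
  let φ : FreeGroup X →* FreeGroup Y := FreeGroup.lift fun x ↦
    .of a ^ e x * .of b * (.of a ^ e x)⁻¹
  let ψ : FreeGroup Y →* TranslationGroup Unit ℤ := FreeGroup.lift fun y ↦
    if y = a then SemidirectProduct.inr (.ofAdd 1) else SemidirectProduct.inl (.of ((), 0))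
  have ψ_a : ψ (.of a) = SemidirectProduct.inr (.ofAdd 1) := by simp [ψ]
  have ψ_b : ψ (.of b) = SemidirectProduct.inl (.of ((), 0)) := by simp [ψ, hab.symm]
  have comp_eq : ψ.comp φ = SemidirectProduct.inl.comp (FreeGroup.map fun x ↦ ((), (e x : ℤ))) := by
    refine FreeGroup.ext_hom _ _ fun x ↦ ?_
    calc ψ (φ (.of x)) = ψ (.of a) ^ e x * ψ (.of b) * (ψ (.of a) ^ e x)⁻¹ := by simp [φ]
      _ = MulAut.conj (SemidirectProduct.inr (.ofAdd (e x : ℤ)))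
            (SemidirectProduct.inl (.of ((), 0))) := by
        rw [ψ_a, ψ_b, ← map_pow, ← ofAdd_nsmul, nsmul_one, MulAut.conj_apply]
      _ = SemidirectProduct.inl (.of ((), (e x : ℤ))) := TranslationGroup.conj_inr_inl_of _ _
  refine ⟨φ, Injective.of_comp (f := ψ) ?_⟩
  rw [← MonoidHom.coe_comp, comp_eq]
  refine SemidirectProduct.inl_injective.comp (FreeGroup.map_injective fun x y hxy ↦ ?_)
  exact injective_e (Nat.cast_injective (Prod.mk.inj hxy).2)

section Mihailova

variable {G : Type*} [Group G]

/-- The Mihailova subgroup of `G × G`: the pairs of elements that agree modulo `N`. -/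
def mihailovaSubgroup (N : Subgroup G) [N.Normal] : Subgroup (G × G) :=
  MonoidHom.eqLocus ((QuotientGroup.mk' N).comp (.fst G G)) ((QuotientGroup.mk' N).comp (.snd G G))

theorem mk_one_mem_mihailovaSubgroup_iff {N : Subgroup G} [N.Normal] {g : G} :
    (g, 1) ∈ mihailovaSubgroup N ↔ g ∈ N :=
  QuotientGroup.eq_one_iff g

theorem mihailovaSubgroup_normalClosure_eq_closure {S R : Set G} (hS : Subgroup.closure S = ⊤) :
    mihailovaSubgroup (Subgroup.normalClosure R) =
      Subgroup.closure ((fun g ↦ (g, g)) '' S ∪ (fun r ↦ (r, 1)) '' R) := by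
  set H := Subgroup.closure ((fun g ↦ (g, g)) '' S ∪ (fun r ↦ (r, 1)) '' R)
  have diag_mem (g : G) : (g, g) ∈ H := by
    have : Subgroup.closure S ≤ H.comap ((MonoidHom.id G).prod (.id G)) :=
      (Subgroup.closure_le _).2 fun g hg ↦ Subgroup.subset_closure (.inl ⟨g, hg, rfl⟩)
    exact this (hS ▸ Subgroup.mem_top g)
  have normal : (H.comap (.inl G G)).Normal := ⟨fun r hr g ↦ by
    simpa using mul_mem (mul_mem (diag_mem g) hr) (inv_mem (diag_mem g))⟩
  have inl_mem {g : G} (hg : g ∈ Subgroup.normalClosure R) : (g, 1) ∈ H :=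
    Subgroup.normalClosure_le_normal (N := H.comap (.inl G G))
      (fun r hr ↦ Subgroup.subset_closure (.inr ⟨r, hr, rfl⟩)) hg
  refine le_antisymm ?_ ((Subgroup.closure_le _).2 ?_)
  · rintro ⟨g, h⟩ hgh
    have : g * h⁻¹ ∈ Subgroup.normalClosure R := by
      rw [← QuotientGroup.eq_one_iff, QuotientGroup.mk_mul, QuotientGroup.mk_inv]
      exact mul_inv_eq_one.2 hgh
    simpa using mul_mem (inl_mem this) (diag_mem h)
  · rintro _ (⟨g, -, rfl⟩ | ⟨r, hr, rfl⟩)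
    · rfl
    · exact mk_one_mem_mihailovaSubgroup_iff.2 (Subgroup.subset_normalClosure hr)

theorem fg_mihailovaSubgroup_normalClosure [Group.FG G] {R : Set G} (hR : R.Finite) :
    (mihailovaSubgroup (Subgroup.normalClosure R)).FG := by
  obtain ⟨S, hS, finite_S⟩ := Group.fg_iff.1 ‹Group.FG G›
  rw [mihailovaSubgroup_normalClosure_eq_closure hS]
  exact (Subgroup.fg_iff _).2 ⟨_, rfl, (finite_S.image _).union (hR.image _)⟩

end Mihailova

theorem membership_problem_undecidable_general (Y : Type*) [Primcodable Y] [Nontrivial Y] :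
    ∃ H : Subgroup (FreeGroup Y × FreeGroup Y), H.FG ∧
      ¬ ∃ f : List (Y × Bool) × List (Y × Bool) → Bool, Computable f ∧
        ∀ w : List (Y × Bool) × List (Y × Bool),
          (f w = true ↔ (FreeGroup.mk w.1, FreeGroup.mk w.2) ∈ H) := by
  obtain ⟨X, _, _, R, finite_R, undecidable⟩ := exists_undecidable_word_problem
  obtain ⟨φ, injective_φ⟩ := exists_injective_freeGroupHom X Y
  obtain ⟨F, computable_F, mk_F⟩ :=
    IsComputableFamily.map (u := FreeGroup.mk) ⟨id, Computable.id, fun _ ↦ rfl⟩ φ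
  refine ⟨(mihailovaSubgroup (Subgroup.normalClosure R)).map (φ.prodMap φ), ?_, ?_⟩
  · rw [Subgroup.fg_iff_submonoid_fg]
    exact ((Subgroup.fg_iff_submonoid_fg _).1
      (fg_mihailovaSubgroup_normalClosure finite_R)).map (φ.prodMap φ)
  · rintro ⟨f, computable_f, hf⟩
    refine undecidable (ComputablePred.computable_iff.2 ⟨fun w ↦ f (F w, []),
      computable_f.comp (computable_F.pair (.const [])), funext fun w ↦ propext ?_⟩)
    have map_mk : (FreeGroup.mk (F w), FreeGroup.mk []) = φ.prodMap φ (FreeGroup.mk w, 1) :=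
      Prod.ext (mk_F w) (map_one φ).symm
    rw [hf, map_mk, Subgroup.mem_map_iff_mem (injective_φ.prodMap injective_φ),
      mk_one_mem_mihailovaSubgroup_iff]

/-- **Mihailova's theorem: undecidability of the membership problem in `Fₙ × Fₙ`.**
For `n ≥ 2`, there is a finitely generated subgroup `H` of `Fₙ × Fₙ` such that
no computable function decides, given an element of `Fₙ × Fₙ` (encoded as a
pair of words in the generators and their inverses), whether it lies in `H`. -/
theorem membership_problem_undecidable (n : ℕ) (hn : 2 ≤ n) :
    ∃ H : Subgroup (FreeGroup (Fin n) × FreeGroup (Fin n)), H.FG ∧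
      ¬ ∃ f : List (Fin n × Bool) × List (Fin n × Bool) → Bool, Computable f ∧
        ∀ w : List (Fin n × Bool) × List (Fin n × Bool),
          (f w = true ↔ (FreeGroup.mk w.1, FreeGroup.mk w.2) ∈ H) :=
  have := Fin.nontrivial_iff_two_le.2 hn
  membership_problem_undecidable_general (Fin n)
end

section
/- The matrices A = [[3,2],[1,1]] and B = [[1,1],[2,3]] in SL₂(ℤ) generate a free group of rank 2 in which every non-identity element is hyperbolic; that is, the group homomorphism from the free group F₂ on two generators to SL₂(ℤ) sending the generators to A and B is injective, and every non-identity element M of its image satisfies |Tr(M)| > 2. -/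
/-- The matrix `A = [[3,2],[1,1]]` in `SL₂(ℤ)`. -/
def matA : Matrix.SpecialLinearGroup (Fin 2) ℤ :=
  ⟨!![3, 2; 1, 1], by norm_num [Matrix.det_fin_two_of]⟩

/-- The matrix `B = [[1,1],[2,3]]` in `SL₂(ℤ)`. -/
def matB : Matrix.SpecialLinearGroup (Fin 2) ℤ :=
  ⟨!![1, 1; 2, 3], by norm_num [Matrix.det_fin_two_of]⟩

/-!
Ping-pong on the projective line, in matrix form. Give every letter `s` (a generator or its inverse)
an interval, spanned by the columns of a matrix `P s`, in such a way that the matrix of `s` maps the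
interval of `t` into the interior of that of `s` whenever `t` is not the inverse of `s`. In terms of
matrices, all entries of `(P s)⁻¹ * s * P t` then have the same sign. Such matrices are closed under
multiplication, so telescoping along a cyclically reduced word `w` which begins with `s` shows that
`(P s)⁻¹ * w * P s` has entries of one sign too, and a `2 × 2` matrix of determinant `1` with this
property satisfies `tr ^ 2 = (a - d) ^ 2 + 4 * b * c + 4 > 4`. Every nontrivial element of the free
group is conjugate to such a word. Injectivity follows, as the identity has trace `2`.
Adjugates replace the inverses to avoid denominators.
-/

open Matrix
open scoped MatrixGroups

section SameSign

variable {l m n R : Type*}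

/-- The entries of `M` are all positive or all negative, encoded by the positivity of all products
of two entries. A real `2 × 2` matrix with this property maps the closed interval of the projective
line between `0` and `∞` into its interior. -/
def HasSameSignEntries [Mul R] [Zero R] [LT R] (M : Matrix m n R) : Prop :=
  ∀ i j i' j', 0 < M i j * M i' j'

namespace HasSameSignEntries

lemma mul [CommSemiring R] [PartialOrder R] [IsStrictOrderedRing R] [Fintype m] [Nonempty m]
    {M : Matrix l m R} {N : Matrix m n R} (hM : HasSameSignEntries M)
    (hN : HasSameSignEntries N) : HasSameSignEntries (M * N) := by
  intro i j i' j'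
  rw [mul_apply, mul_apply, Finset.sum_mul_sum]
  refine Finset.sum_pos (fun k _ ↦ Finset.sum_pos (fun k' _ ↦ ?_) Finset.univ_nonempty)
    Finset.univ_nonempty
  rw [mul_mul_mul_comm]
  exact mul_pos (hM i k i' k') (hN k j k' j')

variable [CommRing R] [LinearOrder R] [IsStrictOrderedRing R]

lemma of_smul {c : R} {M : Matrix m n R} (h : HasSameSignEntries (c • M)) :
    HasSameSignEntries M := by
  intro i j i' j'
  have hc : 0 < c * c * (M i j * M i' j') := by
    simpa only [Matrix.smul_apply, smul_eq_mul, mul_mul_mul_comm] using h i j i' j'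
  exact pos_of_mul_pos_right hc (mul_self_nonneg c)

lemma four_mul_det_lt_sq_trace {M : Matrix (Fin 2) (Fin 2) R} (h : HasSameSignEntries M) :
    4 * M.det < M.trace ^ 2 := by
  rw [det_fin_two, trace_fin_two]
  linarith [sq_nonneg (M 0 0 - M 1 1), h 0 1 1 0]

end HasSameSignEntries

end SameSign

section Conjugation

variable {n R : Type*} [Fintype n] [DecidableEq n] [CommRing R]

lemma det_adjugate_mul_mul (P M : Matrix n n R) :
    (P.adjugate * M * P).det = P.det ^ Fintype.card n * M.det := by
  rw [det_mul_right_comm, adjugate_mul, det_mul, det_smul, det_one, mul_one]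

lemma trace_adjugate_mul_mul (P M : Matrix n n R) :
    (P.adjugate * M * P).trace = P.det * M.trace := by
  rw [trace_mul_cycle, mul_adjugate, smul_one_mul, trace_smul, smul_eq_mul]

lemma adjugate_mul_mul_mul_adjugate_mul_mul (P Q S M N : Matrix n n R) :
    P.adjugate * M * Q * (Q.adjugate * N * S) = Q.det • (P.adjugate * (M * N) * S) := by
  calc
    _ = P.adjugate * M * (Q * Q.adjugate) * N * S := by simp only [Matrix.mul_assoc]
    _ = _ := by
      simp only [mul_adjugate, Matrix.mul_smul, Matrix.smul_mul, Matrix.mul_one, Matrix.mul_assoc]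

lemma trace_eq_of_isConj {M N : Matrix.SpecialLinearGroup n R} (h : IsConj M N) :
    (M : Matrix n n R).trace = (N : Matrix n n R).trace := by
  obtain ⟨C, rfl⟩ := isConj_iff.1 h
  rw [Matrix.SpecialLinearGroup.coe_mul, trace_mul_comm, ← Matrix.SpecialLinearGroup.coe_mul,
    inv_mul_cancel_left]

lemma four_mul_det_lt_sq_trace_of_adjugate_mul_mul [LinearOrder R] [IsStrictOrderedRing R]
    {P M : Matrix (Fin 2) (Fin 2) R} (h : HasSameSignEntries (P.adjugate * M * P)) :
    4 * M.det < M.trace ^ 2 := by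
  have hlt := h.four_mul_det_lt_sq_trace
  rw [det_adjugate_mul_mul, trace_adjugate_mul_mul, Fintype.card_fin, mul_pow,
    mul_left_comm] at hlt
  exact lt_of_mul_lt_mul_left hlt (sq_nonneg P.det)

end Conjugation

section CyclicReduction

variable {α : Type*}

lemma exists_isCyclicallyReduced_isConj_mk (g : FreeGroup α) :
    ∃ L, FreeGroup.IsCyclicallyReduced L ∧ IsConj (FreeGroup.mk L) g := by
  classical
  let C := FreeGroup.reduceCyclically.conjugator g.toWord
  refine ⟨FreeGroup.reduceCyclically g.toWord,
    FreeGroup.reduceCyclically.isCyclicallyReduced FreeGroup.isReduced_toWord,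
    isConj_iff.2 ⟨FreeGroup.mk C, ?_⟩⟩
  rw [FreeGroup.inv_mk, FreeGroup.mul_mk, FreeGroup.mul_mk,
    FreeGroup.reduceCyclically.conj_conjugator_reduceCyclically, FreeGroup.mk_toWord]

lemma isReduced_cons_append_singleton_of_isCyclicallyReduced {s : α × Bool}
    {L : List (α × Bool)} (h : FreeGroup.IsCyclicallyReduced (s :: L)) :
    FreeGroup.IsReduced (s :: L ++ [s]) :=
  List.isChain_append.2 ⟨h.isReduced, List.isChain_singleton s, h.2⟩

end CyclicReduction

section PingPong

variable {α n R : Type*} [Fintype n] [DecidableEq n] [CommRing R] [LinearOrder R]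

/-- The columns of the matrices `P s`, indexed by the letters `s` of the free group on `α`, span
ping-pong cones for the matrices `f a`: up to sign, the matrix of the letter `s` maps the cone of
`t` into the interior of the cone of `s` unless `t` is the inverse of `s`. -/
def IsPingPongFamily (f : α → Matrix.SpecialLinearGroup n R) (P : α × Bool → Matrix n n R) : Prop :=
  ∀ s t : α × Bool, (s.1 = t.1 → s.2 = t.2) →
    HasSameSignEntries ((P s).adjugate * (FreeGroup.lift f (FreeGroup.mk [s]) : Matrix n n R) * P t)

namespace IsPingPongFamily

variable [IsStrictOrderedRing R]

lemma hasSameSignEntries_lift_mk [Nonempty n] {f : α → Matrix.SpecialLinearGroup n R}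
    {P : α × Bool → Matrix n n R} (hP : IsPingPongFamily f P) {L : List (α × Bool)}
    {s t : α × Bool} (hL : FreeGroup.IsReduced (s :: L ++ [t])) :
    HasSameSignEntries
      ((P s).adjugate * (FreeGroup.lift f (FreeGroup.mk (s :: L)) : Matrix n n R) * P t) := by
  induction L generalizing s with
  | nil => exact hP s t (by simpa [FreeGroup.IsReduced] using hL)
  | cons u L ih =>
    obtain ⟨hsu, huL⟩ := FreeGroup.isReduced_cons_cons.1 hL
    have hmul := (hP s u hsu).mul (ih huL)
    rw [adjugate_mul_mul_mul_adjugate_mul_mul, ← Matrix.SpecialLinearGroup.coe_mul, ← map_mul,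
      FreeGroup.mul_mk] at hmul
    exact hmul.of_smul

variable {f : α → SL(2, R)} {P : α × Bool → Matrix (Fin 2) (Fin 2) R}

theorem two_lt_abs_trace_lift (hP : IsPingPongFamily f P) {g : FreeGroup α} (hg : g ≠ 1) :
    2 < |(FreeGroup.lift f g : Matrix (Fin 2) (Fin 2) R).trace| := by
  obtain ⟨L, hL, hLg⟩ := exists_isCyclicallyReduced_isConj_mk g
  rw [← trace_eq_of_isConj ((FreeGroup.lift f).map_isConj hLg)]
  cases L with
  | nil => exact absurd (isConj_one_right.1 hLg) hg
  | cons s L =>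
    have hsign := hP.hasSameSignEntries_lift_mk
      (isReduced_cons_append_singleton_of_isCyclicallyReduced hL)
    have hsq := four_mul_det_lt_sq_trace_of_adjugate_mul_mul hsign
    rw [Matrix.SpecialLinearGroup.det_coe] at hsq
    exact lt_of_pow_lt_pow_left₀ 2 (abs_nonneg _) (by rw [sq_abs]; linarith)

theorem injective_lift (hP : IsPingPongFamily f P) : Function.Injective (FreeGroup.lift f) := by
  refine (injective_iff_map_eq_one _).2 fun g hg ↦ ?_
  by_contra hne
  simpa [hg] using hP.two_lt_abs_trace_lift hne

end IsPingPongFamily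

end PingPong

/-- The ping-pong cones for `matA` and `matB`. In the coordinate `x / y` they are the disjoint
intervals `[3/2, ∞]` for `A`, `[-5/6, -1/2]` for `A⁻¹`, `[0, 2/3]` for `B` and `[-2, -6/5]` for
`B⁻¹`; the last two are the images of the first two under `z ↦ 1 / z`, which exchanges `A` and `B`
by conjugation. -/
def pingPongCone : Fin 2 × Bool → Matrix (Fin 2) (Fin 2) ℤ
  | (0, true) => !![1, 3; 0, 2]
  | (0, false) => !![-1, -5; 2, 6]
  | (1, true) => !![2, 0; 3, 1]
  | (1, false) => !![6, 2; -5, -1]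

lemma isPingPongFamily_matA_matB : IsPingPongFamily ![matA, matB] pingPongCone := by
  unfold IsPingPongFamily HasSameSignEntries
  simp only [FreeGroup.lift_mk, List.map_cons, List.map_nil, List.prod_singleton,
    adjugate_fin_two, mul_apply, Fin.sum_univ_two, Matrix.SpecialLinearGroup.SL2_inv_expl]
  decide

/-- **A free group of hyperbolic matrices in `SL₂(ℤ)`.**
The matrices `A = [[3,2],[1,1]]` and `B = [[1,1],[2,3]]` generate a free group
of rank 2 in `SL₂(ℤ)`: the homomorphism `F₂ → SL₂(ℤ)` sending the generators
to `A` and `B` is injective, and every non-identity element `M` of its image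
is hyperbolic, i.e. `|Tr M| > 2`. -/
theorem free_hyperbolic_subgroup_SL2Z :
    Function.Injective
        (FreeGroup.lift ![matA, matB] :
          FreeGroup (Fin 2) →* Matrix.SpecialLinearGroup (Fin 2) ℤ) ∧
      ∀ M ∈ (FreeGroup.lift ![matA, matB] :
          FreeGroup (Fin 2) →* Matrix.SpecialLinearGroup (Fin 2) ℤ).range,
        M ≠ 1 → 2 < |Matrix.trace (M : Matrix (Fin 2) (Fin 2) ℤ)| := by
  have hP := isPingPongFamily_matA_matB
  refine ⟨hP.injective_lift, ?_⟩
  rintro _ ⟨g, rfl⟩ hg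
  exact hP.two_lt_abs_trace_lift fun h ↦ hg (by rw [h, map_one])
end

section
/- Let A, B ∈ SL₂(ℝ) be hyperbolic matrices (|Tr(A)| > 2 and |Tr(B)| > 2) such that the commutator C = A·B·A⁻¹·B⁻¹ satisfies Tr(C) < −2. Then A and B generate a free group of rank 2 in which every non-identity element is hyperbolic; that is, the homomorphism from the free group F₂ on two generators to SL₂(ℝ) sending the generators to A and B is injective, and every non-identity element M of its image satisfies |Tr(M)| > 2. -/
/-!
Write `x`, `y`, `z` for the traces of `A`, `B`, `A * B`. Fricke's identity turns `tr ⁅A, B⁆ < -2`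
into `x ^ 2 + y ^ 2 + z ^ 2 < x * y * z`. The matrix `J = A * B - B * A` is then elliptic, and
`A * J`, `J`, `J * B` act on the hyperbolic plane as half-turns with `(A * J) * J` proportional to
`A` and `J * (J * B)` to `B`. Through the centres of these half-turns there are pairwise disjoint
geodesics, the first and last of which bound, together with their images under `J`, the ping-pong
half-planes of `A`, `B⁻¹`, `A⁻¹`, `B`.

A half-plane is encoded by a quadratic form on the plane that is positive on the corresponding cone,
normalized so that any two of the four forms have negative definite sum, while `Q (A • v) = -Q' v`
for the forms `Q`, `Q'` of `A`, `A⁻¹`. Chaining these relations along a cyclically reduced word `M`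
gives `Q v < Q (M • v)` for all `v ≠ 0`, and this forces `2 < |tr M|`, because
`D v = Q (M • v) - Q v` satisfies `D (2 • M • v - t • v) = (t ^ 2 - 4) * D v` with `t = tr M`.
-/

open Matrix
open scoped MatrixGroups

section PingPong

open FreeGroup

variable {α G V R : Type*} [Group G] [AddMonoid V] [DistribMulAction G V]
  [AddCommGroup R] [LinearOrder R] [IsOrderedAddMonoid R]

/-- The group element represented by a letter of the free group under the substitution `f`. -/
def letterValue (f : α → G) (l : α × Bool) : G :=
  cond l.2 (f l.1) (f l.1)⁻¹

theorem letterValue_not (f : α → G) (l : α × Bool) :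
    letterValue f (l.1, !l.2) = (letterValue f l)⁻¹ := by
  obtain ⟨i, _ | _⟩ := l <;> simp [letterValue]

theorem lift_mk_cons (f : α → G) (l : α × Bool) (L : List (α × Bool)) :
    lift f (mk (l :: L)) = letterValue f l * lift f (mk L) := by
  simp [letterValue]

/-- Ping-pong data for the substitution `f`, with the table of the letter `l` given as the set where
`Q l` is nonnegative: `map_smul` says that `l` maps the complement of the table of `l⁻¹` into the
table of `l`, and `add_neg` that distinct tables are disjoint away from `0`. -/
structure IsPingPong (f : α → G) (Q : α × Bool → V → R) : Prop where
  map_smul (l : α × Bool) (v : V) : Q l (letterValue f l • v) = -Q (l.1, !l.2) v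
  add_neg {l m : α × Bool} {v : V} (hlm : l ≠ m) (hv : v ≠ 0) : Q l v + Q m v < 0

variable {f : α → G} {Q : α × Bool → V → R} {l m : α × Bool} {L : List (α × Bool)} {v : V}

theorem IsPingPong.neg_le_lift_smul (hQ : IsPingPong f Q) (hL : IsReduced (l :: L))
    (hm : m ∈ (l :: L).getLast?) (hv : v ≠ 0) :
    -Q (m.1, !m.2) v ≤ Q l (lift f (FreeGroup.mk (l :: L)) • v) := by
  induction L generalizing l with
  | nil =>
    obtain rfl : l = m := by simpa using hm
    simpa [letterValue] using (hQ.map_smul l v).ge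
  | cons k L ih =>
    obtain ⟨hlk, hkL⟩ := List.isChain_cons_cons.1 hL
    have hne : k ≠ (l.1, !l.2) := by
      rintro rfl
      simpa using hlk rfl
    have hlt := hQ.add_neg hne ((smul_ne_zero_iff_ne (lift f (FreeGroup.mk (k :: L)))).2 hv)
    rw [lift_mk_cons, mul_smul, hQ.map_smul]
    exact (ih hkL (by simpa using hm)).trans (lt_neg_iff_add_neg.2 hlt).le

theorem IsPingPong.lt_lift_smul (hQ : IsPingPong f Q) (hL : IsCyclicallyReduced (l :: L))
    (hv : v ≠ 0) : Q l v < Q l (lift f (FreeGroup.mk (l :: L)) • v) := by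
  obtain ⟨m, hm⟩ : ∃ m, m ∈ (l :: L).getLast? := ⟨_, List.getLast_mem_getLast? (by simp)⟩
  have hne : l ≠ (m.1, !m.2) := by
    rintro rfl
    simpa using hL.2 m hm _ rfl rfl
  exact (lt_neg_iff_add_neg.2 (hQ.add_neg hne hv)).trans_le
    (hQ.neg_le_lift_smul hL.isReduced hm hv)

theorem exists_eq_conj_mk_isCyclicallyReduced (w : FreeGroup α) :
    ∃ (g : FreeGroup α) (L : List (α × Bool)), IsCyclicallyReduced L ∧ w = g * mk L * g⁻¹ := by
  classical
  refine ⟨mk (reduceCyclically.conjugator w.toWord), reduceCyclically w.toWord,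
    reduceCyclically.isCyclicallyReduced isReduced_toWord, ?_⟩
  rw [inv_mk, mul_mk, mul_mk, reduceCyclically.conj_conjugator_reduceCyclically, mk_toWord]

end PingPong

section QuadraticForm

variable {R V : Type*} [CommRing R] [AddCommGroup V] [Module R V]

theorem quadraticForm_smul_sub_two_smul (Q : QuadraticForm R V) (t : R) (u v : V) :
    Q (t • u - (2 : R) • v) - Q ((2 : R) • u - t • v) = (t ^ 2 - 4) * (Q u - Q v) := by
  simp only [sub_eq_add_neg, ← neg_smul, QuadraticMap.map_add Q, QuadraticMap.map_smul,
    QuadraticMap.polar_smul_left, QuadraticMap.polar_smul_right, smul_eq_mul]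
  ring

theorem four_lt_sq_of_forall_lt_map [LinearOrder R] [IsStrictOrderedRing R] [Nontrivial V]
    {f : Module.End R V} {t : R} (hf : ∀ v, f (f v) = t • f v - v) {Q : QuadraticForm R V}
    (hQ : ∀ v ≠ 0, Q v < Q (f v)) : 4 < t ^ 2 := by
  obtain ⟨v, hv⟩ := exists_ne (0 : V)
  have hlt : 0 < Q (f v) - Q v := sub_pos.2 (hQ v hv)
  set w := (2 : R) • f v - t • v with hw
  have hfw : f w = t • f v - (2 : R) • v := by
    rw [hw, map_sub, _root_.map_smul, _root_.map_smul, hf]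
    module
  have hQw : Q (f w) - Q w = (t ^ 2 - 4) * (Q (f v) - Q v) := by
    rw [hfw, quadraticForm_smul_sub_two_smul]
  have hw0 : w ≠ 0 := by
    intro hw0
    have hsq : t ^ 2 - 4 = 0 := by simpa [hw0, hlt.ne'] using hQw
    have heq : Q ((2 : R) • f v) = Q (t • v) := congrArg Q (sub_eq_zero.1 hw0)
    rw [QuadraticMap.map_smul, QuadraticMap.map_smul, smul_eq_mul, smul_eq_mul] at heq
    linarith [show 4 * (Q (f v) - Q v) = 0 by linear_combination heq + Q v * hsq]
  exact sub_pos.1 (pos_of_mul_pos_left (hQw ▸ sub_pos.2 (hQ w hw0)) hlt.le)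

end QuadraticForm

section SpecialLinearGroup

variable {R : Type*} [CommRing R]

theorem det_coe_fin_two (A : SL(2, R)) : A.1 0 0 * A.1 1 1 - A.1 0 1 * A.1 1 0 = 1 :=
  (det_fin_two A.1).symm.trans A.2

theorem coe_inv_eq_trace_smul_one_sub (A : SL(2, R)) :
    (A⁻¹ : SL(2, R)).1 = A.1.trace • (1 : Matrix (Fin 2) (Fin 2) R) - A.1 := by
  ext i j
  fin_cases i <;> fin_cases j <;> simp [adjugate_fin_two, trace_fin_two]

theorem trace_coe_inv (A : SL(2, R)) : (A⁻¹ : SL(2, R)).1.trace = A.1.trace := by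
  rw [coe_inv_eq_trace_smul_one_sub, trace_sub, trace_smul, trace_one, Fintype.card_fin,
    smul_eq_mul]
  push_cast
  ring

theorem trace_coe_mul_comm (A B : SL(2, R)) : (A * B).1.trace = (B * A).1.trace :=
  trace_mul_comm A.1 B.1

theorem trace_coe_conj (A B : SL(2, R)) : (A * B * A⁻¹).1.trace = B.1.trace := by
  rw [trace_coe_mul_comm, inv_mul_cancel_left]

theorem smul_smul_eq_trace_smul_sub (A : SL(2, R)) (v : Fin 2 → R) :
    A • A • v = A.1.trace • A • v - v := by
  have hsq : A.1.trace • A.1 - A.1 * A.1 = 1 := by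
    rw [← Matrix.SpecialLinearGroup.coe_one, ← mul_inv_cancel A, Matrix.SpecialLinearGroup.coe_mul,
      coe_inv_eq_trace_smul_one_sub, mul_sub, mul_smul_comm, mul_one]
  calc A • A • v = (A.1 * A.1) *ᵥ v := (mulVec_mulVec v A.1 A.1)
    _ = (A.1.trace • A.1 - 1) *ᵥ v := by rw [← hsq, sub_sub_cancel]
    _ = A.1.trace • A • v - v := by rw [sub_mulVec, smul_mulVec, one_mulVec]; rfl

theorem two_lt_abs_trace_of_forall_lt_smul [LinearOrder R] [IsStrictOrderedRing R] {A : SL(2, R)}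
    {Q : QuadraticForm R (Fin 2 → R)} (hQ : ∀ v ≠ 0, Q v < Q (A • v)) : 2 < |A.1.trace| := by
  have h : 4 < A.1.trace ^ 2 := four_lt_sq_of_forall_lt_map (f := toLin' A.1)
    (smul_smul_eq_trace_smul_sub A) hQ
  exact lt_of_pow_lt_pow_left₀ 2 (abs_nonneg _) (by rw [sq_abs]; linarith)

/-- The cubic polynomial of Fricke and Markov in the traces of `A`, `B` and `A * B`, with the sign
and the constant term chosen so that it measures how far the trace of `⁅A, B⁆` lies below `-2`. -/
def frickeGap (A B : SL(2, R)) : R :=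
  A.1.trace * B.1.trace * (A * B).1.trace - A.1.trace ^ 2 - B.1.trace ^ 2 - (A * B).1.trace ^ 2

theorem trace_commutator (A B : SL(2, R)) :
    (A * B * A⁻¹ * B⁻¹).1.trace = -2 - frickeGap A B := by
  have hAB := det_coe_fin_two (A * B)
  simp only [frickeGap, Matrix.SpecialLinearGroup.coe_mul, coe_inv_eq_trace_smul_one_sub,
    trace_fin_two, mul_apply, Fin.sum_univ_two, Matrix.sub_apply, Matrix.smul_apply, smul_eq_mul,
    one_apply_eq, one_apply_ne zero_ne_one, one_apply_ne one_ne_zero] at hAB ⊢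
  linear_combination (B.1 0 0 + B.1 1 1) ^ 2 * det_coe_fin_two A +
    (A.1 0 0 + A.1 1 1) ^ 2 * det_coe_fin_two B - 2 * hAB

theorem frickeGap_comm (A B : SL(2, R)) : frickeGap B A = frickeGap A B := by
  rw [frickeGap, frickeGap, trace_coe_mul_comm B A]
  ring

theorem trace_coe_inv_mul_inv (A B : SL(2, R)) : (A⁻¹ * B⁻¹).1.trace = (A * B).1.trace := by
  rw [← _root_.mul_inv_rev, trace_coe_inv, trace_coe_mul_comm]

theorem frickeGap_inv (A B : SL(2, R)) : frickeGap A⁻¹ B⁻¹ = frickeGap A B := by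
  rw [frickeGap, frickeGap, trace_coe_inv_mul_inv, trace_coe_inv, trace_coe_inv]

theorem mul_sub_mul_inv (A B : SL(2, R)) :
    (A⁻¹).1 * (B⁻¹).1 - (B⁻¹).1 * (A⁻¹).1 = A.1 * B.1 - B.1 * A.1 := by
  simp only [coe_inv_eq_trace_smul_one_sub, sub_mul, mul_sub, smul_mul_assoc, mul_smul_comm,
    one_mul, mul_one, smul_sub]
  rw [smul_comm]
  abel

end SpecialLinearGroup

section EigenForm

section CommRing

variable {R : Type*} [CommRing R]

/-- The polarization of the discriminant `tr M ^ 2 - 4 * det M`, viewed as a quadratic form in `M`;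
it does not change when scalar matrices are added to `M` or `N`. -/
def discrPairing (M N : Matrix (Fin 2) (Fin 2) R) : R :=
  2 * (M * N).trace - M.trace * N.trace

/-- The quadratic form `v ↦ det (v, M v)`, whose null vectors are the eigenvectors of `M`. -/
def eigenForm : Matrix (Fin 2) (Fin 2) R →ₗ[R] QuadraticForm R (Fin 2 → R) :=
  LinearMap.BilinMap.toQuadraticMapLinearMap R R (Fin 2 → R) ∘ₗ
    (toLinearMap₂' R).toLinearMap ∘ₗ LinearMap.mulLeft R !![0, 1; -1, 0]

theorem eigenForm_apply (M : Matrix (Fin 2) (Fin 2) R) (v : Fin 2 → R) :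
    eigenForm M v = M 1 0 * v 0 ^ 2 + (M 1 1 - M 0 0) * v 0 * v 1 - M 0 1 * v 1 ^ 2 := by
  simp only [eigenForm, LinearMap.coe_comp, LinearEquiv.coe_coe, Function.comp_apply,
    LinearMap.mulLeft_apply, LinearMap.BilinMap.toQuadraticMapLinearMap_apply,
    LinearMap.BilinMap.toQuadraticMap_apply, toLinearMap₂'_apply', dotProduct, mulVec, mul_apply,
    of_apply, cons_val', cons_val_zero, cons_val_one, cons_val_fin_one, Fin.sum_univ_two]
  ring

theorem eigenForm_coe_inv (A : SL(2, R)) : eigenForm (A⁻¹).1 = -eigenForm A.1 := by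
  ext v
  simp only [eigenForm_apply, coe_inv_eq_trace_smul_one_sub, trace_fin_two, _root_.neg_apply,
    Matrix.sub_apply, Matrix.smul_apply, smul_eq_mul, one_apply_eq, one_apply_ne zero_ne_one,
    one_apply_ne one_ne_zero]
  ring

theorem eigenForm_apply_smul (M : Matrix (Fin 2) (Fin 2) R) (A : SL(2, R)) (v : Fin 2 → R) :
    eigenForm M (A • v) = eigenForm ((A⁻¹).1 * M * A.1) v := by
  simp only [eigenForm_apply, Matrix.SpecialLinearGroup.smul_def, smul_eq_mulVec, mulVec,
    dotProduct, coe_inv_eq_trace_smul_one_sub, trace_fin_two, mul_apply, Fin.sum_univ_two,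
    Matrix.sub_apply, Matrix.smul_apply, smul_eq_mul, one_apply_eq, one_apply_ne zero_ne_one,
    one_apply_ne one_ne_zero]
  ring

theorem sq_mul_discr_sub_discrPairing_add_sq_mul_discr [Nontrivial R]
    (M N : Matrix (Fin 2) (Fin 2) R) :
    N 1 0 ^ 2 * M.discr - 2 * (M 1 0 * N 1 0) * discrPairing M N + M 1 0 ^ 2 * N.discr =
      (N 1 0 * (M 0 0 - M 1 1) - M 1 0 * (N 0 0 - N 1 1)) ^ 2 := by
  simp only [discrPairing, discr_fin_two, trace_fin_two, det_fin_two, mul_apply, Fin.sum_univ_two]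
  ring

end CommRing

section LinearOrder

variable {R : Type*} [CommRing R] [LinearOrder R] [IsStrictOrderedRing R]
  {M N : Matrix (Fin 2) (Fin 2) R} {v : Fin 2 → R}

theorem apply_one_zero_ne_zero_of_isElliptic (hM : M.IsElliptic) : M 1 0 ≠ 0 := by
  intro h
  rw [IsElliptic, discr_fin_two, trace_fin_two, det_fin_two, h] at hM
  linarith [sq_nonneg (M 0 0 - M 1 1)]

theorem mul_eigenForm_pos_of_isElliptic (hM : M.IsElliptic) (hv : v ≠ 0) :
    0 < M 1 0 * eigenForm M v := by
  rw [eigenForm_apply]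
  by_cases h : v 1 = 0
  · have hv0 : v 0 ≠ 0 := fun h0 => hv (by ext i; fin_cases i <;> assumption)
    have hM0 := apply_one_zero_ne_zero_of_isElliptic hM
    rw [h]
    linarith [show 0 < (M 1 0 * v 0) ^ 2 by positivity]
  · have hdiscr : M.discr * v 1 ^ 2 < 0 := mul_neg_of_neg_of_pos hM (by positivity)
    rw [discr_fin_two, trace_fin_two, det_fin_two] at hdiscr
    linarith [sq_nonneg (2 * M 1 0 * v 0 + (M 1 1 - M 0 0) * v 1)]

theorem apply_one_zero_mul_apply_one_zero_pos (hM : M.IsElliptic) (hN : N.IsElliptic)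
    (h : discrPairing M N < 0) : 0 < M 1 0 * N 1 0 := by
  have hM0 := apply_one_zero_ne_zero_of_isElliptic hM
  have hN0 := apply_one_zero_ne_zero_of_isElliptic hN
  have hMdiscr : N 1 0 ^ 2 * M.discr < 0 := mul_neg_of_pos_of_neg (by positivity) hM
  have hNdiscr : M 1 0 ^ 2 * N.discr < 0 := mul_neg_of_pos_of_neg (by positivity) hN
  refine pos_of_mul_neg_left (b := discrPairing M N) ?_ h.le
  linarith [sq_mul_discr_sub_discrPairing_add_sq_mul_discr M N,
    sq_nonneg (N 1 0 * (M 0 0 - M 1 1) - M 1 0 * (N 0 0 - N 1 1))]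

theorem mul_eigenForm_pos_of_discrPairing_neg (hM : M.IsElliptic) (hN : N.IsElliptic)
    (h : discrPairing M N < 0) (hv : v ≠ 0) : 0 < N 1 0 * eigenForm M v := by
  have hMN := apply_one_zero_mul_apply_one_zero_pos hM hN h
  have hMv := mul_eigenForm_pos_of_isElliptic hM hv
  refine pos_of_mul_pos_left (b := M 1 0 ^ 2) ?_ (sq_nonneg _)
  linarith [mul_pos hMN hMv]

end LinearOrder

end EigenForm

section Cone

variable {R : Type*} [CommRing R]

theorem discr_smul_add_smul_add_smul_mul [Nontrivial R] (A B : SL(2, R)) (i j k : R) :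
    (i • A.1 + j • B.1 + k • (A * B).1).discr =
      i ^ 2 * (A.1.trace ^ 2 - 4) + j ^ 2 * (B.1.trace ^ 2 - 4) + k ^ 2 * ((A * B).1.trace ^ 2 - 4)
      + 2 * i * j * (2 * (A * B).1.trace - A.1.trace * B.1.trace)
      + 2 * i * k * (A.1.trace * (A * B).1.trace - 2 * B.1.trace)
      + 2 * j * k * (B.1.trace * (A * B).1.trace - 2 * A.1.trace) := by
  have hAB := det_coe_fin_two (A * B)
  simp only [discr_fin_two, trace_fin_two, det_fin_two, Matrix.add_apply, Matrix.smul_apply,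
    Matrix.SpecialLinearGroup.coe_mul, mul_apply, Fin.sum_univ_two, smul_eq_mul]
    at hAB ⊢
  linear_combination (-4 * i ^ 2 - 4 * i * k * (B.1 0 0 + B.1 1 1)) * det_coe_fin_two A +
    (-4 * j ^ 2 - 4 * j * k * (A.1 0 0 + A.1 1 1)) * det_coe_fin_two B - 4 * k ^ 2 * hAB

theorem discr_mul_sub_mul [Nontrivial R] (A B : SL(2, R)) :
    (A.1 * B.1 - B.1 * A.1).discr = -4 * (frickeGap A B + 4) := by
  have hAB := det_coe_fin_two (A * B)
  simp only [frickeGap, discr_fin_two, trace_fin_two, det_fin_two, Matrix.sub_apply,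
    Matrix.SpecialLinearGroup.coe_mul, mul_apply, Fin.sum_univ_two] at hAB ⊢
  linear_combination 4 * (B.1 0 0 + B.1 1 1) ^ 2 * det_coe_fin_two A +
    4 * (A.1 0 0 + A.1 1 1) ^ 2 * det_coe_fin_two B - 16 * hAB

theorem discrPairing_mul_sub_mul (A B : SL(2, R)) (i j k : R) :
    discrPairing (i • A.1 + j • B.1 + k • (A * B).1) (A.1 * B.1 - B.1 * A.1) =
      -2 * k * (frickeGap A B + 4) := by
  have hAB := det_coe_fin_two (A * B)
  simp only [frickeGap, discrPairing, trace_fin_two, Matrix.add_apply, Matrix.sub_apply,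
    Matrix.smul_apply, Matrix.SpecialLinearGroup.coe_mul, mul_apply, Fin.sum_univ_two, smul_eq_mul]
    at hAB ⊢
  linear_combination 2 * k * (B.1 0 0 + B.1 1 1) ^ 2 * det_coe_fin_two A +
    2 * k * (A.1 0 0 + A.1 1 1) ^ 2 * det_coe_fin_two B - 8 * k * hAB

theorem mul_eigenForm_pos_of_frickeGap_pos [LinearOrder R] [IsStrictOrderedRing R] {A B : SL(2, R)}
    (hg : 0 < frickeGap A B) {i j k : R} (hk : 0 < k)
    (hN : (i • A.1 + j • B.1 + k • (A * B).1).IsElliptic) {v : Fin 2 → R} (hv : v ≠ 0) :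
    0 < (A.1 * B.1 - B.1 * A.1) 1 0 * eigenForm (i • A.1 + j • B.1 + k • (A * B).1) v := by
  have hJ : (A.1 * B.1 - B.1 * A.1).IsElliptic := by
    rw [IsElliptic, discr_mul_sub_mul]
    linarith
  refine mul_eigenForm_pos_of_discrPairing_neg hN hJ ?_ hv
  rw [discrPairing_mul_sub_mul]
  linarith [mul_pos hk hg]

/-- The table of `A` in the ping-pong game of `A` and `B`, as the cone where a quadratic form is
positive. The null directions of the form, which are the eigenvectors of a matrix of trace `0`,
span a geodesic through the centre of the half-turn `A * J`, where `J = A * B - B * A`. The sign of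
the form is normalized by the entry `J 1 0`, which tells the orientation of the half-turn `J`. -/
def coneForm (A B : SL(2, R)) : QuadraticForm R (Fin 2 → R) :=
  ((A.1 * B.1 - B.1 * A.1) 1 0 * A.1.trace) •
    eigenForm ((A * B).1.trace • A.1 - A.1.trace • (A * B).1)

/-- A form whose null directions span a geodesic through the centre of the half-turn
`A * B - B * A`; this geodesic separates the tables of `A` and `B⁻¹` from those of `A⁻¹` and `B`. -/
def separatingForm (A B : SL(2, R)) : QuadraticForm R (Fin 2 → R) :=
  ((A.1 * B.1 - B.1 * A.1) 1 0 * A.1.trace * B.1.trace * (A * B).1.trace) •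
    eigenForm (B.1.trace • A.1 + A.1.trace • B.1)

theorem separatingForm_comm (A B : SL(2, R)) : separatingForm B A = -separatingForm A B := by
  rw [separatingForm, separatingForm, ← neg_sub, Matrix.neg_apply, trace_coe_mul_comm B A, add_comm]
  module

theorem separatingForm_inv (A B : SL(2, R)) : separatingForm A⁻¹ B⁻¹ = -separatingForm A B := by
  simp only [separatingForm, mul_sub_mul_inv, trace_coe_inv_mul_inv, trace_coe_inv, map_add,
    _root_.map_smul, eigenForm_coe_inv]
  module

theorem coneForm_inv_inv (A B : SL(2, R)) :
    coneForm B⁻¹ A⁻¹ = ((A.1 * B.1 - B.1 * A.1) 1 0 * B.1.trace) •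
      eigenForm ((A * B).1.trace • B.1 - B.1.trace • (A * B).1) := by
  rw [coneForm, mul_sub_mul_inv, ← neg_sub, Matrix.neg_apply, ← _root_.mul_inv_rev]
  simp only [trace_coe_inv, map_sub, _root_.map_smul, eigenForm_coe_inv]
  module

theorem coneForm_apply_smul (A B : SL(2, R)) (v : Fin 2 → R) :
    coneForm A B (A • v) = -coneForm A⁻¹ B⁻¹ v := by
  have hA : (A⁻¹).1 * A.1 * A.1 = A.1 :=
    congrArg Subtype.val (by rw [inv_mul_cancel, one_mul] : A⁻¹ * A * A = A)
  have hAB : (A⁻¹).1 * (A * B).1 * A.1 = (B * A).1 :=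
    congrArg (fun g : SL(2, R) => (g * A).1) (inv_mul_cancel_left A B)
  have hinv : eigenForm (A⁻¹ * B⁻¹).1 = -eigenForm (B * A).1 := by
    rw [← _root_.mul_inv_rev, eigenForm_coe_inv]
  simp only [coneForm, map_sub, _root_.map_smul, _root_.smul_apply, _root_.sub_apply,
    _root_.neg_apply, eigenForm_apply_smul, hA, hAB, hinv, eigenForm_coe_inv, mul_sub_mul_inv,
    trace_coe_inv, trace_coe_inv_mul_inv, smul_eq_mul]
  ring

section LinearOrder

variable [LinearOrder R] [IsStrictOrderedRing R] {A B : SL(2, R)} {v : Fin 2 → R}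

theorem trace_ne_zero_of_frickeGap_pos (hg : 0 < frickeGap A B) : A.1.trace ≠ 0 := by
  intro h
  rw [frickeGap, h] at hg
  linarith [sq_nonneg B.1.trace, sq_nonneg (A * B).1.trace]

theorem trace_mul_ne_zero_of_frickeGap_pos (hg : 0 < frickeGap A B) : (A * B).1.trace ≠ 0 := by
  intro h
  rw [frickeGap, h] at hg
  linarith [sq_nonneg A.1.trace, sq_nonneg B.1.trace]

theorem sq_mul_coneForm_add_separatingForm_neg (hg : 0 < frickeGap A B) (hv : v ≠ 0) :
    (A * B).1.trace ^ 2 * coneForm A B v + separatingForm A B v < 0 := by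
  have hx := trace_ne_zero_of_frickeGap_pos hg
  have hz := trace_mul_ne_zero_of_frickeGap_pos hg
  set x := A.1.trace
  set y := B.1.trace
  set z := (A * B).1.trace
  -- With `J = A * B - B * A`, the left-hand side is `-(J 1 0 * eigenForm N v)`.
  set N := (-(x * z * (z ^ 2 + y ^ 2))) • A.1 + (-(x ^ 2 * y * z)) • B.1 +
    (x ^ 2 * z ^ 2) • (A * B).1 with hN
  have hdiscr : N.discr = -(4 * frickeGap A B * (frickeGap A B + x ^ 2) * (x * z) ^ 2) := by
    rw [hN, discr_smul_add_smul_add_smul_mul, frickeGap]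
    ring
  have hell : N.IsElliptic := by
    rw [IsElliptic, hdiscr, neg_lt_zero]
    positivity
  have hpos := mul_eigenForm_pos_of_frickeGap_pos hg (by positivity) hell hv
  simp only [coneForm, separatingForm, map_add, map_sub, _root_.map_smul, _root_.add_apply,
    _root_.sub_apply, _root_.smul_apply, smul_eq_mul] at hpos ⊢
  linear_combination hpos

theorem coneForm_add_coneForm_inv_inv_neg (hg : 0 < frickeGap A B) (hv : v ≠ 0) :
    coneForm A B v + coneForm B⁻¹ A⁻¹ v < 0 := by
  have hx := trace_ne_zero_of_frickeGap_pos hg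
  rw [coneForm_inv_inv]
  set x := A.1.trace
  set y := B.1.trace
  set z := (A * B).1.trace
  -- As above, the left-hand side is `-(J 1 0 * eigenForm N v)`, where `J = A * B - B * A`.
  set N := (-(x * z)) • A.1 + (-(y * z)) • B.1 + (x ^ 2 + y ^ 2) • (A * B).1 with hN
  have hdiscr : N.discr = -(4 * frickeGap A B * (frickeGap A B + z ^ 2)) := by
    rw [hN, discr_smul_add_smul_add_smul_mul, frickeGap]
    ring
  have hell : N.IsElliptic := by
    rw [IsElliptic, hdiscr, neg_lt_zero]
    positivity
  have hpos := mul_eigenForm_pos_of_frickeGap_pos hg (by positivity) hell hv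
  simp only [coneForm, map_add, map_sub, _root_.map_smul, _root_.add_apply, _root_.sub_apply,
    _root_.smul_apply, smul_eq_mul] at hpos ⊢
  linear_combination hpos

theorem coneForm_add_coneForm_comm_neg (hg : 0 < frickeGap A B) (hv : v ≠ 0) :
    coneForm A B v + coneForm B A v < 0 := by
  have hAB := sq_mul_coneForm_add_separatingForm_neg hg hv
  have hBA := sq_mul_coneForm_add_separatingForm_neg ((frickeGap_comm A B).symm ▸ hg) hv
  rw [separatingForm_comm, trace_coe_mul_comm B A, _root_.neg_apply] at hBA
  refine neg_of_mul_neg_right (a := (A * B).1.trace ^ 2) ?_ (sq_nonneg _)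
  linarith

theorem coneForm_add_coneForm_inv_neg (hg : 0 < frickeGap A B) (hv : v ≠ 0) :
    coneForm A B v + coneForm A⁻¹ B⁻¹ v < 0 := by
  have hAB := sq_mul_coneForm_add_separatingForm_neg hg hv
  have hinv := sq_mul_coneForm_add_separatingForm_neg ((frickeGap_inv A B).symm ▸ hg) hv
  rw [separatingForm_inv, trace_coe_inv_mul_inv, _root_.neg_apply] at hinv
  refine neg_of_mul_neg_right (a := (A * B).1.trace ^ 2) ?_ (sq_nonneg _)
  linarith

end LinearOrder

end Cone

section Letters

variable {R : Type*} [CommRing R]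

/-- The quadratic form assigned to a letter, that is, to `A`, `B` or an inverse of these. The second
argument of `coneForm` is the other generator raised to the same exponent, since the forms of `A`
and `A⁻¹` are related by inverting both generators. -/
def letterForm (A B : SL(2, R)) (l : Fin 2 × Bool) : QuadraticForm R (Fin 2 → R) :=
  coneForm (letterValue ![A, B] l) (letterValue ![A, B] (l.1 + 1, l.2))

theorem eq_or_eq_or_eq_of_ne_letter {l m : Fin 2 × Bool} (h : l ≠ m) :
    m = (l.1, !l.2) ∨ m = (l.1 + 1, l.2) ∨ m = (l.1 + 1, !l.2) := by
  revert l m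
  decide

theorem frickeGap_letterValue (A B : SL(2, R)) (l : Fin 2 × Bool) :
    frickeGap (letterValue ![A, B] l) (letterValue ![A, B] (l.1 + 1, l.2)) = frickeGap A B := by
  obtain ⟨i, _ | _⟩ := l <;> fin_cases i <;>
    simp [letterValue, frickeGap_inv, frickeGap_comm]

variable [LinearOrder R] [IsStrictOrderedRing R] {A B : SL(2, R)}

theorem isPingPong_letterForm (hg : 0 < frickeGap A B) :
    IsPingPong ![A, B] (fun l => letterForm A B l) where
  map_smul l v := by
    rw [letterForm, letterForm, coneForm_apply_smul, letterValue_not,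
      ← letterValue_not _ (l.1 + 1, l.2)]
  add_neg {l m v} hlm hv := by
    have hl : 0 < frickeGap (letterValue ![A, B] l) (letterValue ![A, B] (l.1 + 1, l.2)) := by
      rwa [frickeGap_letterValue]
    rcases eq_or_eq_or_eq_of_ne_letter hlm with rfl | rfl | rfl
    · have h := coneForm_add_coneForm_inv_neg hl hv
      rwa [← letterValue_not, ← letterValue_not] at h
    · have h := coneForm_add_coneForm_comm_neg hl hv
      simpa [letterForm, add_assoc] using h
    · have h := coneForm_add_coneForm_inv_inv_neg hl hv
      rw [← letterValue_not, ← letterValue_not] at h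
      simpa [letterForm, add_assoc] using h

theorem two_lt_abs_trace_lift (hg : 0 < frickeGap A B) {w : FreeGroup (Fin 2)} (hw : w ≠ 1) :
    2 < |(FreeGroup.lift ![A, B] w).1.trace| := by
  obtain ⟨g, L, hL, rfl⟩ := exists_eq_conj_mk_isCyclicallyReduced w
  rw [_root_.map_mul, _root_.map_mul, map_inv, trace_coe_conj]
  cases L with
  | nil => simp [← FreeGroup.one_eq_mk] at hw
  | cons l L =>
    exact two_lt_abs_trace_of_forall_lt_smul fun v hv =>
      (isPingPong_letterForm hg).lt_lift_smul hL hv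

theorem free_hyperbolic_of_commutator_trace_general (A B : SL(2, R))
    (hC : (A * B * A⁻¹ * B⁻¹).1.trace < -2) :
    Function.Injective (FreeGroup.lift ![A, B]) ∧
      ∀ M ∈ (FreeGroup.lift ![A, B]).range, M ≠ 1 → 2 < |M.1.trace| := by
  have hg : 0 < frickeGap A B := by
    rw [trace_commutator] at hC
    linarith
  refine ⟨(injective_iff_map_eq_one _).2 fun w hw => ?_, ?_⟩
  · by_contra hne
    simpa [hw] using two_lt_abs_trace_lift hg hne
  · rintro _ ⟨w, rfl⟩ hw
    exact two_lt_abs_trace_lift hg fun h => hw (by rw [h, map_one])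

end Letters

/-- **Ping-pong criterion for free hyperbolic subgroups of `SL₂(ℝ)`.**
If `A, B ∈ SL₂(ℝ)` are hyperbolic and the commutator `C = A B A⁻¹ B⁻¹`
satisfies `Tr C < -2`, then `A` and `B` generate a free group of rank 2 in
which every non-identity element is hyperbolic. -/
theorem free_hyperbolic_of_commutator_trace
    (A B : Matrix.SpecialLinearGroup (Fin 2) ℝ)
    (hA : 2 < |Matrix.trace (A : Matrix (Fin 2) (Fin 2) ℝ)|)
    (hB : 2 < |Matrix.trace (B : Matrix (Fin 2) (Fin 2) ℝ)|)
    (hC : Matrix.trace ((A * B * A⁻¹ * B⁻¹ :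
        Matrix.SpecialLinearGroup (Fin 2) ℝ) : Matrix (Fin 2) (Fin 2) ℝ) < -2) :
    Function.Injective
        (FreeGroup.lift ![A, B] :
          FreeGroup (Fin 2) →* Matrix.SpecialLinearGroup (Fin 2) ℝ) ∧
      ∀ M ∈ (FreeGroup.lift ![A, B] :
          FreeGroup (Fin 2) →* Matrix.SpecialLinearGroup (Fin 2) ℝ).range,
        M ≠ 1 → 2 < |Matrix.trace (M : Matrix (Fin 2) (Fin 2) ℝ)| := by
  exact free_hyperbolic_of_commutator_trace_general A B hC
end
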